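/- arXiv:2402.06765 — 2 statements merged into one kernel-verified Lean document; each statement's English description precedes it below -/
import Mathlib

section
/- Fix a prior μ0 ∈ ΔΘ. The set of equilibrium sender payoffs (over all equilibria (ψ, α, β)) equals the closed interval [ŵ(μ0), v̂(μ0)]. -/
open MeasureTheory


/-- The Borel σ-algebra on the space of probability measures (the σ-algebra generated by
evaluation maps, i.e. the subspace σ-algebra of the Giry σ-algebra; for metrizable spaces
this is the Borel σ-algebra of the weak* topology). -/
instance probMeasurableSpace {Ω : Type*} [MeasurableSpace Ω] :
    MeasurableSpace (ProbabilityMeasure Ω) :=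
  MeasurableSpace.comap (fun μ => (μ : Measure Ω)) inferInstance

/-- Sender's expected utility from action `a` at belief `μ`. -/
noncomputable def senderEU {A Θ : Type*} [MeasurableSpace Θ]
    (uS : A → Θ → ℝ) (μ : ProbabilityMeasure Θ) (a : A) : ℝ :=
  ∫ θ, uS a θ ∂(μ : Measure Θ)

/-- The receiver's best responses `A*_R(μ)` at belief `μ`. -/
def bestResponses {A Θ : Type*} [MeasurableSpace Θ]
    (uR : A → Θ → ℝ) (μ : ProbabilityMeasure Θ) : Set A :=
  {a | ∀ a' : A, ∫ θ, uR a' θ ∂(μ : Measure Θ) ≤ ∫ θ, uR a θ ∂(μ : Measure Θ)}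

/-- The sender's upper value function `v`. -/
noncomputable def vFun {A Θ : Type*} [MeasurableSpace Θ]
    (uS uR : A → Θ → ℝ) (μ : ProbabilityMeasure Θ) : ℝ :=
  sSup (senderEU uS μ '' bestResponses uR μ)

/-- The sender's lower value function `w`. -/
noncomputable def wFun {A Θ : Type*} [MeasurableSpace Θ]
    (uS uR : A → Θ → ℝ) (μ : ProbabilityMeasure Θ) : ℝ :=
  sInf (senderEU uS μ '' bestResponses uR μ)

/-- The set `I(μ0)` of information policies: distributions over posteriors with
barycenter equal to the prior `μ0`. -/
def infoPolicies {Θ : Type*} [MeasurableSpace Θ] (μ0 : ProbabilityMeasure Θ) :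
    Set (ProbabilityMeasure (ProbabilityMeasure Θ)) :=
  {p | ∀ B : Set Θ, MeasurableSet B →
    ∫ ν, ((ν : Measure Θ) B).toReal ∂(p : Measure (ProbabilityMeasure Θ))
      = ((μ0 : Measure Θ) B).toReal}

/-- `v̂(μ0)`: the sender's best equilibrium (Bayesian persuasion) value. -/
noncomputable def vHat {A Θ : Type*} [MeasurableSpace Θ]
    (uS uR : A → Θ → ℝ) (μ0 : ProbabilityMeasure Θ) : ℝ :=
  sSup ((fun p : ProbabilityMeasure (ProbabilityMeasure Θ) =>
    ∫ ν, vFun uS uR ν ∂(p : Measure (ProbabilityMeasure Θ))) '' infoPolicies μ0)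

/-- `ŵ(μ0)`: the sender's worst equilibrium value. -/
noncomputable def wHat {A Θ : Type*} [MeasurableSpace Θ]
    (uS uR : A → Θ → ℝ) (μ0 : ProbabilityMeasure Θ) : ℝ :=
  sSup ((fun p : ProbabilityMeasure (ProbabilityMeasure Θ) =>
    ∫ ν, wFun uS uR ν ∂(p : Measure (ProbabilityMeasure Θ))) '' infoPolicies μ0)

/-- The set of experiments `Ψ`: measurable maps from states to distributions over
messages. -/
def Experiment (Θ M : Type*) [MeasurableSpace Θ] [MeasurableSpace M] : Type _ :=
  {ψ : Θ → ProbabilityMeasure M // Measurable ψ}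

/-- The sender's expected payoff from experiment `ψ` when the receiver plays `α`. -/
noncomputable def senderPayoff {A Θ M : Type*}
    [MeasurableSpace A] [MeasurableSpace Θ] [MeasurableSpace M]
    (uS : A → Θ → ℝ) (μ0 : ProbabilityMeasure Θ)
    (ψ : Experiment Θ M) (α : M → Experiment Θ M → ProbabilityMeasure A) : ℝ :=
  ∫ θ, ∫ m, ∫ a, uS a θ ∂(α m ψ : Measure A) ∂(ψ.1 θ : Measure M) ∂(μ0 : Measure Θ)

/-- Perfect Bayesian equilibrium of the persuasion game: (0) the receiver's strategy and
belief map are measurable in the realized message; (1) the sender's experiment choice is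
optimal; (2) the receiver best responds to his beliefs after every experiment and
message; (3) the receiver's beliefs are obtained from Bayesian updating. -/
def IsEquilibrium {A Θ M : Type*}
    [MeasurableSpace A] [MeasurableSpace Θ] [MeasurableSpace M]
    (uS uR : A → Θ → ℝ) (μ0 : ProbabilityMeasure Θ)
    (ψ : Experiment Θ M)
    (α : M → Experiment Θ M → ProbabilityMeasure A)
    (β : M → Experiment Θ M → ProbabilityMeasure Θ) : Prop :=
  (∀ ψ' : Experiment Θ M, Measurable fun m : M => α m ψ') ∧
  (∀ ψ' : Experiment Θ M, Measurable fun m : M => β m ψ') ∧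
  (∀ ψ' : Experiment Θ M, senderPayoff uS μ0 ψ' α ≤ senderPayoff uS μ0 ψ α) ∧
  (∀ (ψ' : Experiment Θ M) (m : M),
    (α m ψ' : Measure A)
      {a : A | ∀ a' : A, ∫ θ, uR a' θ ∂(β m ψ' : Measure Θ) ≤
        ∫ θ, uR a θ ∂(β m ψ' : Measure Θ)} = 1) ∧
  (∀ (ψ' : Experiment Θ M) (Mhat : Set M) (Θhat : Set Θ),
    MeasurableSet Mhat → MeasurableSet Θhat →
    ∫ θ, ∫ m in Mhat, ((β m ψ' : Measure Θ) Θhat).toReal ∂(ψ'.1 θ : Measure M)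
        ∂(μ0 : Measure Θ)
      = ∫ θ in Θhat, ((ψ'.1 θ : Measure M) Mhat).toReal ∂(μ0 : Measure Θ))

open Filter Topology ProbabilityTheory

section Selection

lemma bddBelow_range_cont {A : Type*} [TopologicalSpace A] [CompactSpace A] {H : A → ℝ}
    (hH : Continuous H) : BddBelow (Set.range H) :=
  (isCompact_range hH).bddBelow

lemma bddAbove_range_cont {A : Type*} [TopologicalSpace A] [CompactSpace A] {H : A → ℝ}
    (hH : Continuous H) : BddAbove (Set.range H) :=
  (isCompact_range hH).bddAbove

lemma pen_le {A : Type*} [TopologicalSpace A] [CompactSpace A] (H h : A → ℝ)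
    (hH : Continuous H) (hh : Continuous h) (hne : ∃ a, h a = 0)
    (k : ℕ) : (⨅ a, (H a + k * h a)) ≤ sInf (H '' {a | h a = 0}) := by
  obtain ⟨a0, ha0⟩ := hne
  refine le_csInf ⟨H a0, a0, ha0, rfl⟩ ?_
  rintro _ ⟨a, ha, rfl⟩
  have hc : Continuous fun a => H a + k * h a := by fun_prop
  refine (ciInf_le (bddBelow_range_cont hc) a).trans ?_
  have : h a = 0 := ha
  simp [this]

lemma pen_tendsto {A : Type*} [TopologicalSpace A] [CompactSpace A] (H h : A → ℝ)
    (hH : Continuous H) (hh : Continuous h) (h0 : ∀ a, 0 ≤ h a) (hne : ∃ a, h a = 0) :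
    Tendsto (fun k : ℕ => ⨅ a, (H a + k * h a)) atTop (𝓝 (sInf (H '' {a | h a = 0}))) := by
  have hc : ∀ k : ℕ, Continuous fun a => H a + k * h a := fun k => by fun_prop
  have : Nonempty A := ⟨hne.choose⟩
  rw [tendsto_order]
  refine ⟨fun c hclt => ?_, fun c hc' => Eventually.of_forall fun k =>
    (pen_le H h hH hh hne k).trans_lt hc'⟩
  by_contra hcon
  have hall : ∀ k : ℕ, ∃ a, H a + k * h a ≤ c := by
    intro k
    rw [not_eventually] at hcon
    obtain ⟨n, hn, hn'⟩ := (hcon.and_eventually (eventually_ge_atTop k)).exists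
    rw [not_lt] at hn
    obtain ⟨a, -, ha⟩ := isCompact_univ.exists_sInf_image_eq Set.univ_nonempty
      (hc n).continuousOn
    rw [Set.image_univ] at ha
    refine ⟨a, ?_⟩
    have h1 : H a + n * h a ≤ c := by rw [← ha]; exact hn
    have h2 : (k : ℝ) * h a ≤ n * h a :=
      mul_le_mul_of_nonneg_right (by exact_mod_cast hn') (h0 a)
    linarith
  have := IsCompact.nonempty_iInter_of_sequence_nonempty_isCompact_isClosed
    (fun k : ℕ => {a | H a + k * h a ≤ c}) ?_ (fun k => hall k)
    (IsClosed.isCompact (isClosed_le (hc 0) continuous_const))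
    (fun k => (isClosed_le (hc k) continuous_const))
  · obtain ⟨a, ha⟩ := this
    simp only [Set.mem_iInter, Set.mem_ofPred_eq] at ha
    have hz : h a = 0 := by
      by_contra hne0
      have hpos : 0 < h a := lt_of_le_of_ne (h0 a) (Ne.symm hne0)
      obtain ⟨n, hn⟩ := exists_nat_gt ((c - H a) / h a)
      rw [div_lt_iff₀ hpos] at hn
      linarith [ha n]
    have h1 : sInf (H '' {a | h a = 0}) ≤ H a :=
      csInf_le ((bddBelow_range_cont hH).mono (Set.image_subset_range _ _)) ⟨a, hz, rfl⟩
    have h2 := ha 0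
    simp at h2
    linarith
  · intro k a ha
    simp only [Set.mem_ofPred_eq] at ha ⊢
    push_cast at ha
    linarith [h0 a]

lemma meas_iInf {X A : Type*} [MeasurableSpace X] [TopologicalSpace A] [CompactSpace A]
    [Nonempty A] [TopologicalSpace.SeparableSpace A] (H : X → A → ℝ)
    (hm : ∀ a, Measurable fun x => H x a) (hc : ∀ x, Continuous (H x)) :
    Measurable fun x => ⨅ a, H x a := by
  have : (fun x => ⨅ a, H x a) = fun x => ⨅ n : ℕ, H x (TopologicalSpace.denseSeq A n) := by
    funext x
    apply le_antisymm
    · exact le_ciInf fun n => ciInf_le (bddBelow_range_cont (hc x)) _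
    · refine le_ciInf fun a => ?_
      have hcl : IsClosed {a | (⨅ n : ℕ, H x (TopologicalSpace.denseSeq A n)) ≤ H x a} :=
        isClosed_le continuous_const (hc x)
      have := (TopologicalSpace.denseRange_denseSeq A).induction_on (p := fun a =>
        (⨅ n : ℕ, H x (TopologicalSpace.denseSeq A n)) ≤ H x a) a hcl (fun n =>
          ciInf_le ((bddBelow_range_cont (hc x)).mono (by
            rintro _ ⟨n, rfl⟩; exact ⟨_, rfl⟩)) n)
      exact this
  rw [this]
  exact Measurable.iInf fun n => hm _

lemma meas_min {X A : Type*} [MeasurableSpace X] [TopologicalSpace A] [CompactSpace A]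
    [TopologicalSpace.SeparableSpace A] [Nonempty A] (H h : X → A → ℝ)
    (hHm : ∀ a, Measurable fun x => H x a) (hHc : ∀ x, Continuous (H x))
    (hm : ∀ a, Measurable fun x => h x a) (hc : ∀ x, Continuous (h x))
    (h0 : ∀ x a, 0 ≤ h x a) (hne : ∀ x, ∃ a, h x a = 0) :
    Measurable fun x => sInf (H x '' {a | h x a = 0}) := by
  refine measurable_of_tendsto_metrizable (f := fun (k : ℕ) x => ⨅ a, (H x a + k * h x a)) ?_ ?_
  · intro k
    apply meas_iInf
    · intro a; exact (hHm a).add ((hm a).const_mul _)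
    · intro x; have := hHc x; have := hc x; fun_prop
  · rw [tendsto_pi_nhds]
    intro x
    exact pen_tendsto _ _ (hHc x) (hc x) (h0 x) (hne x)

lemma exists_sel {X A : Type*} [MeasurableSpace X] [TopologicalSpace A] [CompactSpace A]
    [TopologicalSpace.MetrizableSpace A] [Nonempty A] [MeasurableSpace A] [BorelSpace A]
    (h : X → A → ℝ)
    (hm : ∀ a, Measurable fun x => h x a) (hc : ∀ x, Continuous (h x))
    (h0 : ∀ x a, 0 ≤ h x a) (hne : ∀ x, ∃ a, h x a = 0) :
    ∃ s : X → A, Measurable s ∧ ∀ x, h x (s x) = 0 := by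
  let _ := TopologicalSpace.metrizableSpaceMetric A
  obtain ⟨q, hq, hqs⟩ := exists_nat_bool_continuous_surjective_of_compact A
  let ι : (ℕ → Bool) → ℝ := fun y => (cantorSetHomeomorphNatToBool.symm y : ℝ)
  have hι : Continuous ι := by fun_prop
  have hιi : Function.Injective ι :=
    Subtype.val_injective.comp cantorSetHomeomorphNatToBool.symm.injective
  have hιe : MeasurableEmbedding ι := (hι.isClosedEmbedding hιi).measurableEmbedding
  have hmeas := meas_min (fun (_ : X) y => ι y) (fun x y => h x (q y)) (fun a => measurable_const)
    (fun _ => hι) (fun y => hm _) (fun x => (hc x).comp hq) (fun x y => h0 x _)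
    (fun x => by obtain ⟨a, ha⟩ := hne x; obtain ⟨y, rfl⟩ := hqs a; exact ⟨y, ha⟩)
  have hex : ∀ x, ∃ y, h x (q y) = 0 ∧ ι y = sInf (ι '' {y | h x (q y) = 0}) := by
    intro x
    have hcomp : IsCompact {y | h x (q y) = 0} :=
      (isClosed_eq ((hc x).comp hq) continuous_const).isCompact
    have hn : {y | h x (q y) = 0}.Nonempty := by
      obtain ⟨a, ha⟩ := hne x; obtain ⟨y, rfl⟩ := hqs a; exact ⟨y, ha⟩
    obtain ⟨y, hy, hy'⟩ := hcomp.exists_sInf_image_eq hn hι.continuousOn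
    exact ⟨y, hy, hy'.symm⟩
  choose y hy hy' using hex
  refine ⟨fun x => q (y x), hq.measurable.comp ?_, hy⟩
  rw [← hιe.measurable_comp_iff]
  convert hmeas using 1
  funext x
  exact hy' x

end Selection

section Beliefs

variable {A Θ : Type*}
    [TopologicalSpace A] [CompactSpace A] [TopologicalSpace.MetrizableSpace A] [Nonempty A]
    [MeasurableSpace A] [BorelSpace A]
    [TopologicalSpace Θ] [CompactSpace Θ] [TopologicalSpace.MetrizableSpace Θ] [Nonempty Θ]
    [MeasurableSpace Θ] [BorelSpace Θ]

lemma meas_coe_pm {Y : Type*} [MeasurableSpace Y] :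
    Measurable (fun ν : ProbabilityMeasure Y => (ν : Measure Y)) :=
  Measurable.of_comap_le le_rfl

lemma meas_pm_of_coe {X Y : Type*} [MeasurableSpace X] [MeasurableSpace Y]
    {f : X → ProbabilityMeasure Y} (hf : Measurable fun x => (f x : Measure Y)) :
    Measurable f := by
  rintro _ ⟨s, hs, rfl⟩
  exact hf hs


/-- A measurable family of probability measures, as a kernel. -/
def toKer {X Y : Type*} [MeasurableSpace X] [MeasurableSpace Y]
    (f : X → ProbabilityMeasure Y) (hf : Measurable f) : Kernel X Y :=
  ⟨fun x => (f x : Measure Y), meas_coe_pm.comp hf⟩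

instance {X Y : Type*} [MeasurableSpace X] [MeasurableSpace Y]
    (f : X → ProbabilityMeasure Y) (hf : Measurable f) : IsMarkovKernel (toKer f hf) :=
  ⟨fun x => (f x).2⟩

lemma toKer_apply {X Y : Type*} [MeasurableSpace X] [MeasurableSpace Y]
    (f : X → ProbabilityMeasure Y) (hf : Measurable f) (x : X) :
    toKer f hf x = (f x : Measure Y) := rfl

lemma u_bdd {u : A → Θ → ℝ} (hu : Continuous fun p : A × Θ => u p.1 p.2) :
    ∃ C, 0 ≤ C ∧ ∀ a θ, |u a θ| ≤ C := by
  obtain ⟨C, hC⟩ := (isCompact_range hu.abs).bddAbove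
  refine ⟨max C 0, le_max_right _ _, fun a θ => le_max_of_le_left (hC ⟨(a, θ), rfl⟩)⟩

lemma u_cont {u : A → Θ → ℝ} (hu : Continuous fun p : A × Θ => u p.1 p.2) (a : A) :
    Continuous (u a) := hu.comp (Continuous.prodMk_right a)

lemma u_int {u : A → Θ → ℝ} (hu : Continuous fun p : A × Θ => u p.1 p.2) (a : A)
    (ν : ProbabilityMeasure Θ) : Integrable (u a) (ν : Measure Θ) := by
  obtain ⟨C, -, hC⟩ := u_bdd hu
  exact Integrable.of_bound (u_cont hu a).aestronglyMeasurable C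
    (Eventually.of_forall fun θ => by simpa using hC a θ)

lemma EU_bdd {u : A → Θ → ℝ} {C : ℝ} (hC : ∀ a θ, |u a θ| ≤ C)
    (ν : ProbabilityMeasure Θ) (a : A) : |senderEU u ν a| ≤ C := by
  have := norm_integral_le_of_norm_le_const (μ := (ν : Measure Θ)) (f := u a) (C := C)
    (Eventually.of_forall fun θ => by simpa using hC a θ)
  simpa [senderEU] using this

lemma EU_meas {u : A → Θ → ℝ} (hu : Continuous fun p : A × Θ => u p.1 p.2) (a : A) :
    Measurable fun ν : ProbabilityMeasure Θ => senderEU u ν a := by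
  exact ((u_cont hu a).stronglyMeasurable.integral_kernel
    (κ := toKer (fun ν : ProbabilityMeasure Θ => ν) measurable_id)).measurable

lemma EU_cont {u : A → Θ → ℝ} (hu : Continuous fun p : A × Θ => u p.1 p.2)
    (ν : ProbabilityMeasure Θ) : Continuous (senderEU u ν) := by
  obtain ⟨C, -, hC⟩ := u_bdd hu
  unfold senderEU
  refine continuous_of_dominated (bound := fun _ => C) ?_ ?_ (integrable_const _) ?_
  · intro a; exact (u_cont hu a).aestronglyMeasurable
  · intro a; exact Eventually.of_forall fun θ => by simpa using hC a θ
  · exact Eventually.of_forall fun θ => hu.comp (Continuous.prodMk_left θ)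

lemma EU_joint {u : A → Θ → ℝ} (hu : Continuous fun p : A × Θ => u p.1 p.2) :
    Measurable fun p : ProbabilityMeasure Θ × A => senderEU u p.1 p.2 := by
  have := measurable_uncurry_of_continuous_of_measurable
    (u := fun (a : A) (ν : ProbabilityMeasure Θ) => senderEU u ν a)
    (fun ν => EU_cont hu ν) (fun a => EU_meas hu a)
  exact this.comp measurable_swap

lemma EU_neg (u : A → Θ → ℝ) (ν : ProbabilityMeasure Θ) (a : A) :
    senderEU (fun a θ => - u a θ) ν a = - senderEU u ν a := integral_neg _

/-- Receiver loss. -/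
noncomputable def loss (uR : A → Θ → ℝ) (ν : ProbabilityMeasure Θ) (a : A) : ℝ :=
  - (⨅ a', senderEU (fun a θ => - uR a θ) ν a') - senderEU uR ν a

lemma hneg {u : A → Θ → ℝ} (hu : Continuous fun p : A × Θ => u p.1 p.2) :
    Continuous fun p : A × Θ => - u p.1 p.2 := hu.neg

lemma EU_le_best {uR : A → Θ → ℝ} (hR : Continuous fun p : A × Θ => uR p.1 p.2)
    (ν : ProbabilityMeasure Θ) (a : A) : 
    senderEU uR ν a ≤ - (⨅ a', senderEU (fun a θ => - uR a θ) ν a') := by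
  have := ciInf_le (bddBelow_range_cont (EU_cont (u := fun a θ => - uR a θ) (hneg hR) ν)) a
  rw [EU_neg] at this
  linarith

lemma loss_nonneg {uR : A → Θ → ℝ} (hR : Continuous fun p : A × Θ => uR p.1 p.2)
    (ν : ProbabilityMeasure Θ) (a : A) : 0 ≤ loss uR ν a := by
  have := EU_le_best hR ν a
  unfold loss; linarith

lemma BR_iff {uR : A → Θ → ℝ} (hR : Continuous fun p : A × Θ => uR p.1 p.2)
    (ν : ProbabilityMeasure Θ) (a : A) : a ∈ bestResponses uR ν ↔ loss uR ν a = 0 := by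
  constructor
  · intro h
    apply le_antisymm _ (loss_nonneg hR ν a)
    have : - senderEU uR ν a ≤ ⨅ a', senderEU (fun a θ => - uR a θ) ν a' := by
      refine le_ciInf fun a' => ?_
      rw [EU_neg]
      exact neg_le_neg (h a')
    unfold loss; linarith
  · intro h a'
    have := EU_le_best hR ν a'
    unfold loss at h
    change senderEU uR ν a' ≤ senderEU uR ν a
    linarith

lemma loss_meas {uR : A → Θ → ℝ} (hR : Continuous fun p : A × Θ => uR p.1 p.2) (a : A) :
    Measurable fun ν : ProbabilityMeasure Θ => loss uR ν a := by
  unfold loss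
  exact (meas_iInf _ (EU_meas (u := fun a θ => - uR a θ) (hneg hR)) (EU_cont (u := fun a θ => - uR a θ) (hneg hR))).neg.sub (EU_meas hR a)

lemma loss_cont {uR : A → Θ → ℝ} (hR : Continuous fun p : A × Θ => uR p.1 p.2)
    (ν : ProbabilityMeasure Θ) : Continuous (loss uR ν) := by
  unfold loss
  exact continuous_const.sub (EU_cont hR ν)

lemma loss_ex {uR : A → Θ → ℝ} (hR : Continuous fun p : A × Θ => uR p.1 p.2)
    (ν : ProbabilityMeasure Θ) : ∃ a, loss uR ν a = 0 := by
  obtain ⟨a, -, ha⟩ := isCompact_univ.exists_sInf_image_eq Set.univ_nonempty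
      (EU_cont (u := fun a θ => - uR a θ) (hneg hR) ν).continuousOn
  rw [Set.image_univ] at ha
  refine ⟨a, ?_⟩
  unfold loss
  rw [iInf, ha, EU_neg]; ring

lemma BR_eq {uR : A → Θ → ℝ} (hR : Continuous fun p : A × Θ => uR p.1 p.2)
    (ν : ProbabilityMeasure Θ) : bestResponses uR ν = {a | loss uR ν a = 0} := by
  ext a; exact BR_iff hR ν a

lemma BR_isClosed {uR : A → Θ → ℝ} (hR : Continuous fun p : A × Θ => uR p.1 p.2)
    (ν : ProbabilityMeasure Θ) : IsClosed (bestResponses uR ν) := by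
  rw [BR_eq hR]
  exact isClosed_eq (loss_cont hR ν) continuous_const

lemma w_meas {uS uR : A → Θ → ℝ} (hS : Continuous fun p : A × Θ => uS p.1 p.2)
    (hR : Continuous fun p : A × Θ => uR p.1 p.2) :
    Measurable fun ν : ProbabilityMeasure Θ => wFun uS uR ν := by
  unfold wFun
  simp_rw [BR_eq hR]
  exact meas_min _ _ (EU_meas hS) (EU_cont hS) (loss_meas hR) (loss_cont hR)
    (loss_nonneg hR) (loss_ex hR)

lemma w_le {uS uR : A → Θ → ℝ} (hS : Continuous fun p : A × Θ => uS p.1 p.2)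
    {ν : ProbabilityMeasure Θ} {a : A} (ha : a ∈ bestResponses uR ν) :
    wFun uS uR ν ≤ senderEU uS ν a :=
  csInf_le ((bddBelow_range_cont (EU_cont hS ν)).mono (Set.image_subset_range _ _)) ⟨a, ha, rfl⟩

lemma le_v {uS uR : A → Θ → ℝ} (hS : Continuous fun p : A × Θ => uS p.1 p.2)
    {ν : ProbabilityMeasure Θ} {a : A} (ha : a ∈ bestResponses uR ν) :
    senderEU uS ν a ≤ vFun uS uR ν :=
  le_csSup ((bddAbove_range_cont (EU_cont hS ν)).mono (Set.image_subset_range _ _)) ⟨a, ha, rfl⟩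

lemma w_att {uS uR : A → Θ → ℝ} (hS : Continuous fun p : A × Θ => uS p.1 p.2)
    (hR : Continuous fun p : A × Θ => uR p.1 p.2) (ν : ProbabilityMeasure Θ) :
    ∃ a ∈ bestResponses uR ν, wFun uS uR ν = senderEU uS ν a := 
  (BR_isClosed hR ν).isCompact.exists_sInf_image_eq
    (by rw [BR_eq hR]; exact loss_ex hR ν) (EU_cont hS ν).continuousOn

lemma v_eq_neg_w (uS uR : A → Θ → ℝ) (ν : ProbabilityMeasure Θ) :
    vFun uS uR ν = - wFun (fun a θ => - uS a θ) uR ν := by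
  unfold vFun wFun
  rw [Real.sInf_def, neg_neg]
  congr 1
  ext t
  simp [EU_neg]

lemma v_meas {uS uR : A → Θ → ℝ} (hS : Continuous fun p : A × Θ => uS p.1 p.2)
    (hR : Continuous fun p : A × Θ => uR p.1 p.2) :
    Measurable fun ν : ProbabilityMeasure Θ => vFun uS uR ν := by
  simp_rw [v_eq_neg_w]
  exact (w_meas (hneg hS) hR).neg

lemma w_bdd {uS uR : A → Θ → ℝ} (hS : Continuous fun p : A × Θ => uS p.1 p.2)
    (hR : Continuous fun p : A × Θ => uR p.1 p.2) {C : ℝ} (hC : ∀ a θ, |uS a θ| ≤ C)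
    (ν : ProbabilityMeasure Θ) : |wFun uS uR ν| ≤ C := by
  obtain ⟨a, -, ha⟩ := w_att hS hR ν
  rw [ha]; exact EU_bdd hC ν a

lemma v_bdd {uS uR : A → Θ → ℝ} (hS : Continuous fun p : A × Θ => uS p.1 p.2)
    (hR : Continuous fun p : A × Θ => uR p.1 p.2) {C : ℝ} (hC : ∀ a θ, |uS a θ| ≤ C)
    (ν : ProbabilityMeasure Θ) : |vFun uS uR ν| ≤ C := by
  rw [v_eq_neg_w, abs_neg]
  exact w_bdd (hneg hS) hR (by simpa using hC) ν

lemma w_sel {uS uR : A → Θ → ℝ} (hS : Continuous fun p : A × Θ => uS p.1 p.2)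
    (hR : Continuous fun p : A × Θ => uR p.1 p.2) :
    ∃ s : ProbabilityMeasure Θ → A, Measurable s ∧ (∀ ν, s ν ∈ bestResponses uR ν) ∧
      ∀ ν, senderEU uS ν (s ν) = wFun uS uR ν := by
  obtain ⟨s, hs, hs'⟩ := exists_sel
    (fun (ν : ProbabilityMeasure Θ) a => loss uR ν a + |senderEU uS ν a - wFun uS uR ν|)
    (fun a => (loss_meas hR a).add (((EU_meas hS a).sub (w_meas hS hR)).abs))
    (fun ν => (loss_cont hR ν).add ((EU_cont hS ν).sub continuous_const).abs)
    (fun ν a => add_nonneg (loss_nonneg hR ν a) (abs_nonneg _))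
    (fun ν => by
      obtain ⟨a, ha, ha'⟩ := w_att hS hR ν
      refine ⟨a, ?_⟩
      rw [(BR_iff hR ν a).1 ha, ha']; simp)
  refine ⟨s, hs, fun ν => ?_, fun ν => ?_⟩
  · rw [BR_iff hR]
    have := hs' ν
    linarith [loss_nonneg hR ν (s ν), abs_nonneg (senderEU uS ν (s ν) - wFun uS uR ν)]
  · have := hs' ν
    have h2 : |senderEU uS ν (s ν) - wFun uS uR ν| = 0 := by
      linarith [loss_nonneg hR ν (s ν), abs_nonneg (senderEU uS ν (s ν) - wFun uS uR ν)]
    rw [abs_eq_zero] at h2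
    linarith

lemma v_sel {uS uR : A → Θ → ℝ} (hS : Continuous fun p : A × Θ => uS p.1 p.2)
    (hR : Continuous fun p : A × Θ => uR p.1 p.2) :
    ∃ s : ProbabilityMeasure Θ → A, Measurable s ∧ (∀ ν, s ν ∈ bestResponses uR ν) ∧
      ∀ ν, senderEU uS ν (s ν) = vFun uS uR ν := by
  obtain ⟨s, hs, h1, h2⟩ := w_sel (uS := fun a θ => - uS a θ) (hneg hS) hR
  refine ⟨s, hs, h1, fun ν => ?_⟩
  have := h2 ν
  rw [EU_neg] at this
  rw [v_eq_neg_w]; linarith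

end Beliefs

section JRep

variable {A Θ M N : Type*}
    [TopologicalSpace A] [CompactSpace A] [TopologicalSpace.MetrizableSpace A] [Nonempty A]
    [MeasurableSpace A] [BorelSpace A]
    [TopologicalSpace Θ] [CompactSpace Θ] [TopologicalSpace.MetrizableSpace Θ] [Nonempty Θ]
    [MeasurableSpace Θ] [BorelSpace Θ]
    [MeasurableSpace M] [MeasurableSpace N]

/-- `J` is the joint law of state and message generated by drawing `x` from `p`, the state from
`ν x`, and sending the message `h x`. -/
def JRep (J : Measure (Θ × M)) (p : Measure N) (ν : N → ProbabilityMeasure Θ)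
    (hν : Measurable ν) (h : N → M) : Prop :=
  J = (p ⊗ₘ toKer ν hν).map (fun z => (z.2, h z.1))

lemma int_bdd {X : Type*} [MeasurableSpace X] {p : Measure X} [IsProbabilityMeasure p]
    {f : X → ℝ} (hf : Measurable f) {C : ℝ} (hC : ∀ x, |f x| ≤ C) : Integrable f p :=
  Integrable.of_bound hf.aestronglyMeasurable C (Eventually.of_forall fun x => by simpa using hC x)

lemma abs_integral_le {X : Type*} [MeasurableSpace X] {p : Measure X} [IsProbabilityMeasure p]
    {f : X → ℝ} {C : ℝ} (hC : ∀ x, |f x| ≤ C) : |∫ x, f x ∂p| ≤ C := by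
  have := norm_integral_le_of_norm_le_const (μ := p) (f := f) (C := C)
    (Eventually.of_forall fun θ => by simpa using hC θ)
  simpa using this

lemma meas_inner {u : A → Θ → ℝ} (hu : Continuous fun p : A × Θ => u p.1 p.2)
    {κ : M → ProbabilityMeasure A} (hκ : Measurable κ) :
    Measurable fun z : Θ × M => ∫ a, u a z.1 ∂(κ z.2 : Measure A) := by
  have h1 : StronglyMeasurable fun q : (Θ × M) × A => u q.2 q.1.1 := by
    have : Measurable fun q : (Θ × M) × A => u q.2 q.1.1 :=
      hu.measurable.comp (measurable_snd.prodMk measurable_fst.fst)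
    exact this.stronglyMeasurable
  exact (h1.integral_kernel_prod_right' (κ := toKer (fun z : Θ × M => κ z.2)
    (hκ.comp measurable_snd))).measurable

lemma meas_EUκ {u : A → Θ → ℝ} (hu : Continuous fun p : A × Θ => u p.1 p.2)
    {κ : N → ProbabilityMeasure A} (hκ : Measurable κ)
    {ν : N → ProbabilityMeasure Θ} (hν : Measurable ν) :
    Measurable fun x => ∫ a, senderEU u (ν x) a ∂(κ x : Measure A) := by
  have h1 : StronglyMeasurable fun q : N × A => senderEU u (ν q.1) q.2 := by
    have : Measurable fun q : N × A => senderEU u (ν q.1) q.2 :=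
      (EU_joint hu).comp ((hν.comp measurable_fst).prodMk measurable_snd)
    exact this.stronglyMeasurable
  exact (h1.integral_kernel_prod_right' (κ := toKer κ hκ)).measurable

lemma E_rep {u : A → Θ → ℝ} (hu : Continuous fun p : A × Θ => u p.1 p.2)
    {J : Measure (Θ × M)} {p : Measure N} [IsProbabilityMeasure p]
    {ν : N → ProbabilityMeasure Θ} {hν : Measurable ν} {h : N → M} (hh : Measurable h)
    (hJ : JRep J p ν hν h) {κ : M → ProbabilityMeasure A} (hκ : Measurable κ) :
    ∫ z, ∫ a, u a z.1 ∂(κ z.2 : Measure A) ∂J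
      = ∫ x, ∫ a, senderEU u (ν x) a ∂(κ (h x) : Measure A) ∂p := by
  obtain ⟨C, -, hC⟩ := u_bdd hu
  have hm : Measurable (fun z : N × Θ => (z.2, h z.1)) :=
    measurable_snd.prodMk (hh.comp measurable_fst)
  rw [hJ, integral_map hm.aemeasurable (meas_inner hu hκ).aestronglyMeasurable,
    Measure.integral_compProd]
  · congr 1
    funext x
    simp only [toKer_apply]
    rw [integral_integral_swap]
    · rfl
    · refine int_bdd (C := C) ?_ (fun z => hC _ _)
      exact hu.measurable.comp measurable_swap
  · refine int_bdd (C := C) ((meas_inner hu hκ).comp hm) (fun z => abs_integral_le fun a => hC _ _)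

lemma EUκ_int {u : A → Θ → ℝ} (hu : Continuous fun p : A × Θ => u p.1 p.2)
    {p : Measure N} [IsProbabilityMeasure p]
    {κ : N → ProbabilityMeasure A} (hκ : Measurable κ)
    {ν : N → ProbabilityMeasure Θ} (hν : Measurable ν) :
    Integrable (fun x => ∫ a, senderEU u (ν x) a ∂(κ x : Measure A)) p := by
  obtain ⟨C, -, hC⟩ := u_bdd hu
  exact int_bdd (meas_EUκ hu hκ hν) (fun x => abs_integral_le fun a => EU_bdd hC _ _)

lemma EU_int {u : A → Θ → ℝ} (hu : Continuous fun p : A × Θ => u p.1 p.2)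
    (m : Measure A) [IsProbabilityMeasure m] (ν : ProbabilityMeasure Θ) :
    Integrable (senderEU u ν) m := by
  obtain ⟨C, -, hC⟩ := u_bdd hu
  exact int_bdd (EU_cont hu ν).measurable (fun a => EU_bdd hC _ _)

/-- Best receiver utility dominates any mixed action. -/
lemma mix_le {uR : A → Θ → ℝ} (hR : Continuous fun p : A × Θ => uR p.1 p.2)
    (m1 m2 : ProbabilityMeasure A) (ν : ProbabilityMeasure Θ)
    (h1 : ∀ᵐ a ∂(m1 : Measure A), a ∈ bestResponses uR ν) :
    ∫ a, senderEU uR ν a ∂(m2 : Measure A) ≤ ∫ a, senderEU uR ν a ∂(m1 : Measure A) := by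
  have e1 : ∫ a, senderEU uR ν a ∂(m1 : Measure A)
      = - (⨅ a', senderEU (fun a θ => - uR a θ) ν a') := by
    have : ∀ᵐ a ∂(m1 : Measure A),
        senderEU uR ν a = - (⨅ a', senderEU (fun a θ => - uR a θ) ν a') := by
      filter_upwards [h1] with a ha
      have := (BR_iff hR ν a).1 ha
      unfold loss at this; linarith
    rw [integral_congr_ae this]; simp
  rw [e1]
  have := integral_mono (EU_int hR (m2 : Measure A) ν) (integrable_const _)
    (fun a => EU_le_best hR ν a)
  simpa using this

lemma mix_eq {uR : A → Θ → ℝ} (hR : Continuous fun p : A × Θ => uR p.1 p.2)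
    (m1 m2 : ProbabilityMeasure A) (ν : ProbabilityMeasure Θ)
    (h1 : ∀ᵐ a ∂(m1 : Measure A), a ∈ bestResponses uR ν)
    (he : ∫ a, senderEU uR ν a ∂(m2 : Measure A) = ∫ a, senderEU uR ν a ∂(m1 : Measure A)) :
    ∀ᵐ a ∂(m2 : Measure A), a ∈ bestResponses uR ν := by
  have e1 : ∫ a, senderEU uR ν a ∂(m1 : Measure A)
      = - (⨅ a', senderEU (fun a θ => - uR a θ) ν a') := by
    have : ∀ᵐ a ∂(m1 : Measure A),
        senderEU uR ν a = - (⨅ a', senderEU (fun a θ => - uR a θ) ν a') := by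
      filter_upwards [h1] with a ha
      have := (BR_iff hR ν a).1 ha
      unfold loss at this; linarith
    rw [integral_congr_ae this]; simp
  have h0 : ∫ a, loss uR ν a ∂(m2 : Measure A) = 0 := by
    unfold loss
    rw [integral_sub (integrable_const _) (EU_int hR (m2 : Measure A) ν), he, e1]; simp
  have hi : Integrable (loss uR ν) (m2 : Measure A) := by
    unfold loss
    exact (integrable_const _).sub (EU_int hR (m2 : Measure A) ν)
  rw [integral_eq_zero_iff_of_nonneg (loss_nonneg hR ν) hi] at h0
  filter_upwards [h0] with a ha
  exact (BR_iff hR ν a).2 ha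

lemma transfer {N₁ N₂ : Type*} [MeasurableSpace N₁] [MeasurableSpace N₂] {uR : A → Θ → ℝ}
    (hR : Continuous fun p : A × Θ => uR p.1 p.2)
    {J : Measure (Θ × M)} {p₁ : Measure N₁} [IsProbabilityMeasure p₁]
    {p₂ : Measure N₂} [IsProbabilityMeasure p₂]
    {ν₁ : N₁ → ProbabilityMeasure Θ} {hν₁ : Measurable ν₁} {h₁ : N₁ → M} (hh₁ : Measurable h₁)
    {ν₂ : N₂ → ProbabilityMeasure Θ} {hν₂ : Measurable ν₂} {h₂ : N₂ → M} (hh₂ : Measurable h₂)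
    (hJ₁ : JRep J p₁ ν₁ hν₁ h₁) (hJ₂ : JRep J p₂ ν₂ hν₂ h₂)
    {κ₁ κ₂ : M → ProbabilityMeasure A} (hκ₁ : Measurable κ₁) (hκ₂ : Measurable κ₂)
    (ho₁ : ∀ᵐ x ∂p₁, ∀ᵐ a ∂(κ₁ (h₁ x) : Measure A), a ∈ bestResponses uR (ν₁ x))
    (ho₂ : ∀ᵐ x ∂p₂, ∀ᵐ a ∂(κ₂ (h₂ x) : Measure A), a ∈ bestResponses uR (ν₂ x)) :
    ∀ᵐ x ∂p₁, ∀ᵐ a ∂(κ₂ (h₁ x) : Measure A), a ∈ bestResponses uR (ν₁ x) := by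
  have a1 := E_rep hR hh₁ hJ₁ hκ₁
  have a2 := E_rep hR hh₁ hJ₁ hκ₂
  have b1 := E_rep hR hh₂ hJ₂ hκ₁
  have b2 := E_rep hR hh₂ hJ₂ hκ₂
  have i1 := EUκ_int hR (p := p₁) (hκ₁.comp hh₁) hν₁
  have i2 := EUκ_int hR (p := p₁) (hκ₂.comp hh₁) hν₁
  have j1 := EUκ_int hR (p := p₂) (hκ₁.comp hh₂) hν₂
  have j2 := EUκ_int hR (p := p₂) (hκ₂.comp hh₂) hν₂
  have hle : ∫ x, ∫ a, senderEU uR (ν₁ x) a ∂(κ₁ (h₁ x) : Measure A) ∂p₁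
      ≤ ∫ x, ∫ a, senderEU uR (ν₁ x) a ∂(κ₂ (h₁ x) : Measure A) ∂p₁ := by
    rw [← a1, ← a2, b1, b2]
    refine integral_mono_ae j1 j2 ?_
    filter_upwards [ho₂] with x hx
    exact mix_le hR _ _ _ hx
  have hnn : 0 ≤ᵐ[p₁] fun x => (∫ a, senderEU uR (ν₁ x) a ∂(κ₁ (h₁ x) : Measure A))
      - ∫ a, senderEU uR (ν₁ x) a ∂(κ₂ (h₁ x) : Measure A) := by
    filter_upwards [ho₁] with x hx
    have := mix_le hR (κ₁ (h₁ x)) (κ₂ (h₁ x)) (ν₁ x) hx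
    simp only [Pi.zero_apply]; linarith
  have hz : ∫ x, ((∫ a, senderEU uR (ν₁ x) a ∂(κ₁ (h₁ x) : Measure A))
      - ∫ a, senderEU uR (ν₁ x) a ∂(κ₂ (h₁ x) : Measure A)) ∂p₁ = 0 := by
    apply le_antisymm _ (integral_nonneg_of_ae hnn)
    have := integral_sub i1 i2
    simp only [Function.comp_apply] at this
    rw [this]; linarith
  rw [integral_eq_zero_iff_of_nonneg_ae hnn (i1.sub i2)] at hz
  filter_upwards [hz, ho₁] with x hx hx1
  refine mix_eq hR _ _ _ hx1 ?_
  simp only [Pi.zero_apply] at hx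
  linarith

end JRep

section Bayes

variable {A Θ M N : Type*}
    [TopologicalSpace A] [CompactSpace A] [TopologicalSpace.MetrizableSpace A] [Nonempty A]
    [MeasurableSpace A] [BorelSpace A]
    [TopologicalSpace Θ] [CompactSpace Θ] [TopologicalSpace.MetrizableSpace Θ] [Nonempty Θ]
    [MeasurableSpace Θ] [BorelSpace Θ]
    [MeasurableSpace M] [MeasurableSpace N]

/-- Joint law of state and message. -/
noncomputable def joint (μ0 : ProbabilityMeasure Θ) (ψ : Experiment Θ M) : Measure (Θ × M) :=
  (μ0 : Measure Θ) ⊗ₘ toKer ψ.1 ψ.2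

instance (μ0 : ProbabilityMeasure Θ) (ψ : Experiment Θ M) :
    IsProbabilityMeasure (joint μ0 ψ) := by unfold joint; infer_instance

lemma joint_fst (μ0 : ProbabilityMeasure Θ) (ψ : Experiment Θ M) :
    (joint μ0 ψ).fst = μ0 := by unfold joint; exact Measure.fst_compProd _ _

lemma payoff_eq {uS : A → Θ → ℝ} (hS : Continuous fun p : A × Θ => uS p.1 p.2)
    (μ0 : ProbabilityMeasure Θ) (ψ : Experiment Θ M)
    (α : M → Experiment Θ M → ProbabilityMeasure A) (hα : Measurable fun m => α m ψ) :
    senderPayoff uS μ0 ψ α = ∫ z, ∫ a, uS a z.1 ∂(α z.2 ψ : Measure A) ∂(joint μ0 ψ) := by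
  obtain ⟨C, -, hC⟩ := u_bdd hS
  unfold joint senderPayoff
  rw [Measure.integral_compProd]
  · rfl
  · exact int_bdd (C := C) (meas_inner hS hα) (fun z => abs_integral_le fun a => hC _ _)

lemma pm_apply_meas {ν : N → ProbabilityMeasure Θ} (hν : Measurable ν) {B : Set Θ}
    (hB : MeasurableSet B) : Measurable fun x => (ν x : Measure Θ) B :=
  (Measure.measurable_coe hB).comp (meas_coe_pm.comp hν)

lemma bayes_rhs (μ0 : ProbabilityMeasure Θ) (ψ : Experiment Θ M) {Mh : Set M} {Th : Set Θ}
    (hM : MeasurableSet Mh) (hT : MeasurableSet Th) :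
    ∫ θ in Th, ((ψ.1 θ : Measure M) Mh).toReal ∂(μ0 : Measure Θ)
      = (joint μ0 ψ (Th ×ˢ Mh)).toReal := by
  unfold joint
  rw [Measure.compProd_apply_prod hT hM, integral_toReal]
  · rfl
  · exact ((Measure.measurable_coe hM).comp (meas_coe_pm.comp ψ.2)).aemeasurable
  · exact Eventually.of_forall fun θ => measure_lt_top _ _

lemma bayes_lhs (μ0 : ProbabilityMeasure Θ) (ψ : Experiment Θ M)
    {b : M → ProbabilityMeasure Θ} (hb : Measurable b) {Mh : Set M} {Th : Set Θ}
    (hM : MeasurableSet Mh) (hT : MeasurableSet Th) :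
    ∫ θ, ∫ m in Mh, ((b m : Measure Θ) Th).toReal ∂(ψ.1 θ : Measure M) ∂(μ0 : Measure Θ)
      = (((joint μ0 ψ).snd ⊗ₘ toKer b hb) (Mh ×ˢ Th)).toReal := by
  have hbm := pm_apply_meas hb hT
  rw [Measure.compProd_apply_prod hM hT]
  have e1 : ∀ θ, ∫ m in Mh, ((b m : Measure Θ) Th).toReal ∂(ψ.1 θ : Measure M)
      = (∫⁻ m, Mh.indicator (fun m => (b m : Measure Θ) Th) m ∂(ψ.1 θ : Measure M)).toReal := by
    intro θ
    rw [integral_toReal hbm.aemeasurable (Eventually.of_forall fun θ => measure_lt_top _ _),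
      lintegral_indicator hM]
  simp_rw [e1]
  have hind : Measurable (Mh.indicator (fun m => (b m : Measure Θ) Th)) := hbm.indicator hM
  rw [integral_toReal]
  · congr 1
    simp only [toKer_apply]
    rw [← lintegral_indicator hM, Measure.snd, lintegral_map hind measurable_snd]
    exact (Measure.lintegral_compProd (κ := toKer ψ.1 ψ.2) (hind.comp measurable_snd)).symm
  · exact (hind.lintegral_kernel (κ := toKer ψ.1 ψ.2)).aemeasurable
  · refine Eventually.of_forall fun θ => ?_
    refine lt_of_le_of_lt (lintegral_mono (g := fun _ => 1) ?_) (by simp)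
    intro m
    by_cases h : m ∈ Mh
    · simp only [Set.indicator_of_mem h]; exact prob_le_one
    · simp [Set.indicator_of_notMem h]

lemma bayes_iff (μ0 : ProbabilityMeasure Θ) (ψ : Experiment Θ M)
    {b : M → ProbabilityMeasure Θ} (hb : Measurable b) :
    (∀ (Mh : Set M) (Th : Set Θ), MeasurableSet Mh → MeasurableSet Th →
      ∫ θ, ∫ m in Mh, ((b m : Measure Θ) Th).toReal ∂(ψ.1 θ : Measure M) ∂(μ0 : Measure Θ)
      = ∫ θ in Th, ((ψ.1 θ : Measure M) Mh).toReal ∂(μ0 : Measure Θ))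
    ↔ JRep (joint μ0 ψ) (joint μ0 ψ).snd b hb id := by
  have hsw : Measurable (fun z : M × Θ => (z.2, id z.1)) := measurable_swap
  constructor
  · intro H
    unfold JRep
    refine Measure.ext_prod_iff.2 ?_
    intro Th Mh hT hM
    have := H Mh Th hM hT
    rw [bayes_lhs μ0 ψ hb hM hT, bayes_rhs μ0 ψ hM hT,
      ENNReal.toReal_eq_toReal_iff' (measure_ne_top _ _) (measure_ne_top _ _)] at this
    rw [Measure.map_apply hsw (hT.prod hM), ← this]
    congr 1
    ext z; simp [and_comm]
  · intro H Mh Th hM hT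
    rw [bayes_lhs μ0 ψ hb hM hT, bayes_rhs μ0 ψ hM hT]
    have : joint μ0 ψ (Th ×ˢ Mh)
        = (((joint μ0 ψ).snd ⊗ₘ toKer b hb).map (fun z => (z.2, id z.1))) (Th ×ˢ Mh) := by
      rw [← H]
    rw [this, Measure.map_apply hsw (hT.prod hM)]
    congr 2
    ext z; simp [and_comm]

lemma exists_posterior (J : Measure (Θ × M)) [IsProbabilityMeasure J] :
    ∃ (b : M → ProbabilityMeasure Θ) (hb : Measurable b),
      JRep J J.snd b hb id := by
  let _ := TopologicalSpace.metrizableSpaceMetric Θ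
  let J' : Measure (M × Θ) := J.map Prod.swap
  have : IsProbabilityMeasure J' := Measure.isProbabilityMeasure_map measurable_swap.aemeasurable
  let b : M → ProbabilityMeasure Θ := fun m => ⟨J'.condKernel m, inferInstance⟩
  have hb : Measurable b := meas_pm_of_coe J'.condKernel.measurable
  refine ⟨b, hb, ?_⟩
  unfold JRep
  have h1 : toKer b hb = J'.condKernel := by ext m; rfl
  have h2 : J.snd = J'.fst := by
    simp only [J', Measure.fst_map_swap]
  rw [h1, h2, Measure.disintegrate J' J'.condKernel]
  simp only [J']
  rw [Measure.map_map (by fun_prop) measurable_swap]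
  symm
  exact Measure.map_id

/-- Mean of posteriors is the prior. -/
def Mean (μ0 : ProbabilityMeasure Θ) (p : Measure N) (ν : N → ProbabilityMeasure Θ) : Prop :=
  ∀ B : Set Θ, MeasurableSet B → ∫ x, ((ν x : Measure Θ) B).toReal ∂p
      = ((μ0 : Measure Θ) B).toReal

lemma mean_iff (μ0 : ProbabilityMeasure Θ) (p : Measure N) [IsProbabilityMeasure p]
    {ν : N → ProbabilityMeasure Θ} (hν : Measurable ν) :
    Mean μ0 p ν ↔ (p ⊗ₘ toKer ν hν).snd = μ0 := by
  have key : ∀ B : Set Θ, MeasurableSet B → ∫ x, ((ν x : Measure Θ) B).toReal ∂p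
      = ((p ⊗ₘ toKer ν hν).snd B).toReal := by
    intro B hB
    rw [integral_toReal (pm_apply_meas hν hB).aemeasurable
      (Eventually.of_forall fun θ => measure_lt_top _ _), Measure.snd_apply hB]
    congr 1
    rw [show (Prod.snd ⁻¹' B : Set (N × Θ)) = Set.univ ×ˢ B by ext; simp,
      Measure.compProd_apply_prod MeasurableSet.univ hB]
    simp [toKer_apply]
  constructor
  · intro H
    ext B hB
    have := H B hB
    rw [key B hB] at this
    rwa [ENNReal.toReal_eq_toReal_iff' (measure_ne_top _ _) (measure_ne_top _ _)] at this
  · intro H B hB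
    rw [key B hB, H]

lemma mean_of_rep {μ0 : ProbabilityMeasure Θ} {J : Measure (Θ × M)} (hJ : J.fst = μ0)
    {p : Measure N} [IsProbabilityMeasure p]
    {ν : N → ProbabilityMeasure Θ} {hν : Measurable ν} {h : N → M} (hh : Measurable h)
    (hr : JRep J p ν hν h) : Mean μ0 p ν := by
  rw [mean_iff μ0 p hν, ← hJ, hr, Measure.fst, Measure.map_map measurable_fst (by fun_prop)]
  rfl

lemma info_of_mean {μ0 : ProbabilityMeasure Θ} {p : Measure N} [IsProbabilityMeasure p]
    {ν : N → ProbabilityMeasure Θ} (hν : Measurable ν) (h : Mean μ0 p ν) :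
    (⟨p.map ν, Measure.isProbabilityMeasure_map hν.aemeasurable⟩ :
      ProbabilityMeasure (ProbabilityMeasure Θ)) ∈ infoPolicies μ0 := by
  intro B hB
  have : Measurable fun ν : ProbabilityMeasure Θ => ((ν : Measure Θ) B).toReal :=
    (pm_apply_meas measurable_id hB).ennreal_toReal
  rw [← h B hB]
  exact integral_map hν.aemeasurable this.aestronglyMeasurable

/-- Every distribution of posteriors together with a message rule can be implemented. -/
lemma implement [StandardBorelSpace M] [Nonempty M]
    {μ0 : ProbabilityMeasure Θ} {p : Measure N} [IsProbabilityMeasure p]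
    {ν : N → ProbabilityMeasure Θ} (hν : Measurable ν) (hmean : Mean μ0 p ν)
    {h : N → M} (hh : Measurable h) :
    ∃ ψ : Experiment Θ M, JRep (joint μ0 ψ) p ν hν h := by
  have hm : Measurable (fun z : N × Θ => (z.2, h z.1)) := by fun_prop
  let J : Measure (Θ × M) := (p ⊗ₘ toKer ν hν).map (fun z => (z.2, h z.1))
  have : IsProbabilityMeasure J := Measure.isProbabilityMeasure_map hm.aemeasurable
  have hfst : J.fst = μ0 := by
    rw [← (mean_iff μ0 p hν).1 hmean, Measure.fst, Measure.map_map measurable_fst hm]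
    rfl
  let k : Θ → ProbabilityMeasure M := fun m => ⟨J.condKernel m, inferInstance⟩
  have hk : Measurable k := meas_pm_of_coe J.condKernel.measurable
  refine ⟨⟨k, hk⟩, ?_⟩
  unfold JRep joint
  have h1 : toKer k hk = J.condKernel := by ext m; rfl
  change (μ0 : Measure Θ) ⊗ₘ toKer k hk = J
  rw [h1, ← hfst, Measure.disintegrate J J.condKernel]

end Bayes

section Core

variable {A Θ M N : Type*}
    [TopologicalSpace A] [CompactSpace A] [TopologicalSpace.MetrizableSpace A] [Nonempty A]
    [MeasurableSpace A] [BorelSpace A]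
    [TopologicalSpace Θ] [CompactSpace Θ] [TopologicalSpace.MetrizableSpace Θ] [Nonempty Θ]
    [MeasurableSpace Θ] [BorelSpace Θ]
    [MeasurableSpace M] [MeasurableSpace N]

/-- Point-mass probability measure. -/
noncomputable def dir {X : Type*} [MeasurableSpace X] (x : X) : ProbabilityMeasure X :=
  ⟨Measure.dirac x, inferInstance⟩

lemma dir_meas {X Y : Type*} [MeasurableSpace X] [MeasurableSpace Y] {g : X → Y}
    (hg : Measurable g) : Measurable fun x => dir (g x) :=
  meas_pm_of_coe (Measure.measurable_dirac.comp hg)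

lemma BR_ms {uR : A → Θ → ℝ} (hR : Continuous fun p : A × Θ => uR p.1 p.2)
    (ν : ProbabilityMeasure Θ) : MeasurableSet (bestResponses uR ν) :=
  (BR_isClosed hR ν).measurableSet

lemma ae_dir {uR : A → Θ → ℝ} (hR : Continuous fun p : A × Θ => uR p.1 p.2)
    {ν : ProbabilityMeasure Θ} {a : A} :
    (∀ᵐ a' ∂(dir a : Measure A), a' ∈ bestResponses uR ν) ↔ a ∈ bestResponses uR ν :=
  ae_dirac_iff (BR_ms hR ν)

lemma int_dir {u : A → Θ → ℝ} (hu : Continuous fun p : A × Θ => u p.1 p.2)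
    (ν : ProbabilityMeasure Θ) (a : A) :
    ∫ a', senderEU u ν a' ∂(dir a : Measure A) = senderEU u ν a :=
  integral_dirac' _ _ (EU_cont hu ν).stronglyMeasurable

lemma core [StandardBorelSpace M] [Nonempty M] {uS uR : A → Θ → ℝ}
    (hS : Continuous fun p : A × Θ => uS p.1 p.2)
    (hR : Continuous fun p : A × Θ => uR p.1 p.2)
    {μ0 : ProbabilityMeasure Θ} {p : Measure N} [IsProbabilityMeasure p]
    {ν : N → ProbabilityMeasure Θ} (hν : Measurable ν) (hmean : Mean μ0 p ν)
    {h : N → M} (hh : Measurable h) {g : M → A} (hg : Measurable g)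
    (hbr : ∀ x, g (h x) ∈ bestResponses uR (ν x)) :
    ∃ ψ : Experiment Θ M, ∀ (b : M → ProbabilityMeasure Θ) (hb : Measurable b),
      JRep (joint μ0 ψ) (joint μ0 ψ).snd b hb id →
      (∀ κ : M → ProbabilityMeasure A, Measurable κ →
        (∀ m, ∀ᵐ a ∂(κ m : Measure A), a ∈ bestResponses uR (b m)) →
        ∫ x, wFun uS uR (ν x) ∂p ≤ ∫ z, ∫ a, uS a z.1 ∂(κ z.2 : Measure A) ∂(joint μ0 ψ)) ∧
      ∫ x, senderEU uS (ν x) (g (h x)) ∂p ≤ ∫ m, vFun uS uR (b m) ∂(joint μ0 ψ).snd := by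
  obtain ⟨C, -, hC⟩ := u_bdd hS
  obtain ⟨ψ, hψ⟩ := implement hν hmean hh
  have hdg : Measurable fun m => dir (g m) := dir_meas hg
  have ho1 : ∀ᵐ x ∂p, ∀ᵐ a ∂(dir (g (h x)) : Measure A), a ∈ bestResponses uR (ν x) :=
    Eventually.of_forall fun x => (ae_dir hR).2 (hbr x)
  refine ⟨ψ, fun b hb hJ => ⟨fun κ hκ hopt => ?_, ?_⟩⟩
  · have := transfer hR hh measurable_id hψ hJ hdg hκ ho1
      (Eventually.of_forall fun m => hopt m)
    rw [E_rep hS hh hψ hκ]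
    refine integral_mono_ae (int_bdd ((w_meas hS hR).comp hν) (fun x => w_bdd hS hR hC _))
      (EUκ_int hS (hκ.comp hh) hν) ?_
    filter_upwards [this] with x hx
    have h1 : ∫ a, wFun uS uR (ν x) ∂(κ (h x) : Measure A) ≤
        ∫ a, senderEU uS (ν x) a ∂(κ (h x) : Measure A) := by
      refine integral_mono_ae (integrable_const _) (EU_int hS _ _) ?_
      filter_upwards [hx] with a ha using w_le hS ha
    simpa using h1
  · obtain ⟨s, hs, hsbr, -⟩ := w_sel hS hR
    have hds : Measurable fun m => dir (s (b m)) := dir_meas (hs.comp hb)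
    have := transfer hR measurable_id hh hJ hψ hds hdg
      (Eventually.of_forall fun m => (ae_dir hR).2 (hsbr _)) ho1
    have e1 := E_rep hS hh hψ hdg
    have e2 := E_rep hS measurable_id hJ hdg
    simp only [int_dir hS, id] at e1 e2
    rw [← e1, e2]
    refine integral_mono_ae (int_bdd ((EU_joint hS).comp (hb.prodMk hg)) fun x => EU_bdd hC _ _)
      (int_bdd ((v_meas hS hR).comp hb) fun x => v_bdd hS hR hC _) ?_
    filter_upwards [this] with m hm
    exact le_v hS ((ae_dir hR).1 hm)

lemma exists_embed [TopologicalSpace M] [PolishSpace M] [BorelSpace M] [Uncountable M] :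
    ∃ (e : A → M) (g : M → A), Measurable e ∧ Measurable g ∧ ∀ a, g (e a) = a := by
  let _ := TopologicalSpace.metrizableSpaceMetric A
  obtain ⟨f, hf⟩ := exists_measurableEmbedding_real A
  let E : ℝ ≃ᵐ M := PolishSpace.measurableEquivOfNotCountable
    (not_countable_iff.2 inferInstance) (not_countable_iff.2 inferInstance)
  have he := E.measurableEmbedding.comp hf
  exact ⟨_, he.invFun, he.measurable, he.measurable_invFun, he.leftInverse_invFun⟩

lemma core_unc [TopologicalSpace M] [PolishSpace M] [BorelSpace M] [Uncountable M]
    {uS uR : A → Θ → ℝ}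
    (hS : Continuous fun p : A × Θ => uS p.1 p.2)
    (hR : Continuous fun p : A × Θ => uR p.1 p.2)
    {μ0 : ProbabilityMeasure Θ} {p : Measure N} [IsProbabilityMeasure p]
    {ν : N → ProbabilityMeasure Θ} (hν : Measurable ν) (hmean : Mean μ0 p ν)
    {s : N → A} (hs : Measurable s)
    (hbr : ∀ x, s x ∈ bestResponses uR (ν x)) :
    ∃ ψ : Experiment Θ M, ∀ (b : M → ProbabilityMeasure Θ) (hb : Measurable b),
      JRep (joint μ0 ψ) (joint μ0 ψ).snd b hb id →
      (∀ κ : M → ProbabilityMeasure A, Measurable κ →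
        (∀ m, ∀ᵐ a ∂(κ m : Measure A), a ∈ bestResponses uR (b m)) →
        ∫ x, wFun uS uR (ν x) ∂p ≤ ∫ z, ∫ a, uS a z.1 ∂(κ z.2 : Measure A) ∂(joint μ0 ψ)) ∧
      ∫ x, senderEU uS (ν x) (s x) ∂p ≤ ∫ m, vFun uS uR (b m) ∂(joint μ0 ψ).snd := by
  obtain ⟨e, g, he, hg, hge⟩ := exists_embed (A := A) (M := M)
  have := core hS hR hν hmean (he.comp hs) hg (fun x => by
    simp only [Function.comp_apply, hge]; exact hbr x)
  simpa only [Function.comp_apply, hge] using this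

lemma core_fin [TopologicalSpace M] [PolishSpace M] [BorelSpace M] 
    [Finite N] [MeasurableSingletonClass N] [Nonempty N]
    (f : N → M) (hf : Function.Injective f)
    {uS uR : A → Θ → ℝ}
    (hS : Continuous fun p : A × Θ => uS p.1 p.2)
    (hR : Continuous fun p : A × Θ => uR p.1 p.2)
    {μ0 : ProbabilityMeasure Θ} {p : Measure N} [IsProbabilityMeasure p]
    {ν : N → ProbabilityMeasure Θ} (hmean : Mean μ0 p ν)
    {s : N → A}
    (hbr : ∀ x, s x ∈ bestResponses uR (ν x)) :
    ∃ ψ : Experiment Θ M, ∀ (b : M → ProbabilityMeasure Θ) (hb : Measurable b),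
      JRep (joint μ0 ψ) (joint μ0 ψ).snd b hb id →
      (∀ κ : M → ProbabilityMeasure A, Measurable κ →
        (∀ m, ∀ᵐ a ∂(κ m : Measure A), a ∈ bestResponses uR (b m)) →
        ∫ x, wFun uS uR (ν x) ∂p ≤ ∫ z, ∫ a, uS a z.1 ∂(κ z.2 : Measure A) ∂(joint μ0 ψ)) ∧
      ∫ x, senderEU uS (ν x) (s x) ∂p ≤ ∫ m, vFun uS uR (b m) ∂(joint μ0 ψ).snd := by
  have : Nonempty M := ⟨f (Classical.arbitrary N)⟩
  have hfe : MeasurableEmbedding f :=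
    ⟨hf, measurable_of_finite f, fun S _ => (Set.toFinite (f '' S)).measurableSet⟩
  have := core hS hR (measurable_of_finite ν) hmean hfe.measurable
    ((measurable_of_finite s).comp hfe.measurable_invFun) (fun x => by
    simp only [Function.comp_apply, hfe.leftInverse_invFun x]; exact hbr x)
  simpa only [Function.comp_apply, hfe.leftInverse_invFun _] using this

end Core

section MaxExists

variable {A Θ : Type*}
    [TopologicalSpace A] [CompactSpace A] [TopologicalSpace.MetrizableSpace A] [Nonempty A]
    [MeasurableSpace A] [BorelSpace A]
    [TopologicalSpace Θ] [CompactSpace Θ] [TopologicalSpace.MetrizableSpace Θ] [Nonempty Θ]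
    [MeasurableSpace Θ] [BorelSpace Θ]

lemma ae_nonneg_of_test {τ : Measure A} [IsProbabilityMeasure τ] {D : A → ℝ} (hD : Measurable D)
    {C : ℝ} (hC : ∀ a, |D a| ≤ C)
    (ht : ∀ g : A → ℝ, Continuous g → (∀ a, 0 ≤ g a) → 0 ≤ ∫ a, g a * D a ∂τ) :
    ∀ᵐ a ∂τ, 0 ≤ D a := by
  let _ := TopologicalSpace.metrizableSpaceMetric A
  have hDi : Integrable D τ := int_bdd hD hC
  by_contra hcon
  have hSm : MeasurableSet {a | D a < 0} := measurableSet_lt hD measurable_const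
  have hS0 : 0 < τ {a | D a < 0} := by
    rw [pos_iff_ne_zero]
    intro h0
    apply hcon
    rw [ae_iff]
    convert h0 using 2
    ext a; simp
  obtain ⟨F, hFS, hF, hF0⟩ := hSm.exists_lt_isClosed_of_ne_top (measure_ne_top _ _) hS0
  have h1 : 0 ≤ ∫ a in F, D a ∂τ := by
    have hlim : Tendsto (fun n => ∫ a, (hF.apprSeq n a : ℝ) * D a ∂τ) atTop
        (𝓝 (∫ a, F.indicator D a ∂τ)) := by
      refine tendsto_integral_of_dominated_convergence (fun _ => C) ?_ (integrable_const _) ?_ ?_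
      · intro n
        have : Continuous fun a => (hF.apprSeq n a : ℝ) :=
          NNReal.continuous_coe.comp (hF.apprSeq n).continuous
        exact (this.measurable.mul hD).aestronglyMeasurable
      · intro n
        refine Eventually.of_forall fun a => ?_
        have h1 : (hF.apprSeq n a : ℝ) ≤ 1 := by
          exact_mod_cast HasOuterApproxClosed.apprSeq_apply_le_one hF n a
        have h0 : (0 : ℝ) ≤ (hF.apprSeq n a : ℝ) := NNReal.coe_nonneg _
        rw [Real.norm_eq_abs, abs_mul, abs_of_nonneg h0]
        have := hC a
        have := abs_nonneg (D a)
        nlinarith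
      · refine Eventually.of_forall fun a => ?_
        have := (tendsto_pi_nhds.1 (HasOuterApproxClosed.tendsto_apprSeq hF)) a
        have h2 := ((NNReal.continuous_coe.tendsto _).comp this).mul_const (D a)
        have heq : F.indicator D a
            = ((F.indicator (fun _ => (1 : NNReal)) a : NNReal) : ℝ) * D a := by
          by_cases ha : a ∈ F <;> simp [ha]
        rw [heq]
        exact h2
    rw [integral_indicator hF.measurableSet] at hlim
    refine ge_of_tendsto' hlim fun n => ht _ ?_ (fun a => NNReal.coe_nonneg _)
    exact NNReal.continuous_coe.comp (hF.apprSeq n).continuous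
  have h2 : ∫ a in F, (- D a) ∂τ = 0 := by
    apply le_antisymm
    · rw [integral_neg]; linarith
    · refine setIntegral_nonneg hF.measurableSet fun a ha => ?_
      have : D a < 0 := hFS ha
      linarith
  rw [setIntegral_eq_zero_iff_of_nonneg_ae] at h2
  · have h3 : ∀ᵐ a ∂(τ.restrict F), False := by
      filter_upwards [h2, ae_restrict_mem hF.measurableSet] with a ha haF
      have : D a < 0 := hFS haF
      simp at ha; linarith
    rw [eventually_false_iff_eq_bot, ae_eq_bot, Measure.restrict_eq_zero] at h3
    exact hF0.ne' h3
  · filter_upwards [ae_restrict_mem hF.measurableSet] with a ha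
    have : D a < 0 := hFS ha
    simp; linarith
  · exact hDi.neg.integrableOn

lemma cont_integral {X : Type*} [TopologicalSpace X] [CompactSpace X] [MeasurableSpace X]
    [OpensMeasurableSpace X] {f : X → ℝ} (hf : Continuous f) :
    Continuous fun π : ProbabilityMeasure X => ∫ x, f x ∂(π : Measure X) := by
  rw [continuous_iff_continuousAt]
  intro π
  exact (ProbabilityMeasure.tendsto_iff_forall_integral_tendsto.1 tendsto_id)
    (BoundedContinuousFunction.mkOfCompact ⟨f, hf⟩)

lemma E_dir {N : Type*} [MeasurableSpace N]
    {u : A → Θ → ℝ} (hu : Continuous fun p : A × Θ => u p.1 p.2)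
    {J : Measure (Θ × A)} {p : Measure N} [IsProbabilityMeasure p]
    {ν : N → ProbabilityMeasure Θ} {hν : Measurable ν} {h : N → A} (hh : Measurable h)
    (hJ : JRep J p ν hν h) :
    ∫ z, u z.2 z.1 ∂J = ∫ x, senderEU u (ν x) (h x) ∂p := by
  have := E_rep hu hh hJ (κ := fun a => dir a) (dir_meas measurable_id)
  simp only [int_dir hu] at this
  rw [← this]
  congr 1
  funext z
  exact (integral_dirac' (fun a => u a z.1) z.2
    (hu.comp (Continuous.prodMk_left z.1)).stronglyMeasurable).symm

lemma EU_test {uR : A → Θ → ℝ} (hR : Continuous fun p : A × Θ => uR p.1 p.2)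
    (g : A → ℝ) (a' : A) (ν : ProbabilityMeasure Θ) (a : A) :
    senderEU (fun a θ => g a * (uR a θ - uR a' θ)) ν a
      = g a * (senderEU uR ν a - senderEU uR ν a') := by
  unfold senderEU
  rw [integral_const_mul, integral_sub (u_int hR a ν) (u_int hR a' ν)]

lemma test_cont {uR : A → Θ → ℝ} (hR : Continuous fun p : A × Θ => uR p.1 p.2)
    {g : A → ℝ} (hg : Continuous g) (a' : A) :
    Continuous fun p : A × Θ => (fun a θ => g a * (uR a θ - uR a' θ)) p.1 p.2 :=
  (hg.comp continuous_fst).mul (hR.sub ((u_cont hR a').comp continuous_snd))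

/-- Obedient joint laws of state and recommended action. -/
def Obed (uR : A → Θ → ℝ) (μ0 : ProbabilityMeasure Θ) : Set (ProbabilityMeasure (Θ × A)) :=
  {π | (∀ f : Θ → ℝ, Continuous f →
      ∫ z, f z.1 ∂(π : Measure (Θ × A)) = ∫ θ, f θ ∂(μ0 : Measure Θ)) ∧
    ∀ g : A → ℝ, Continuous g → (∀ a, 0 ≤ g a) → ∀ a' : A,
      0 ≤ ∫ z, g z.2 * (uR z.2 z.1 - uR a' z.1) ∂(π : Measure (Θ × A))}

lemma Obed_closed {uR : A → Θ → ℝ} (hR : Continuous fun p : A × Θ => uR p.1 p.2)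
    (μ0 : ProbabilityMeasure Θ) : IsClosed (Obed uR μ0) := by
  have : Obed uR μ0 = (⋂ (f : Θ → ℝ) (_ : Continuous f), {π : ProbabilityMeasure (Θ × A) |
      ∫ z, f z.1 ∂(π : Measure (Θ × A)) = ∫ θ, f θ ∂(μ0 : Measure Θ)}) ∩
      ⋂ (g : A → ℝ) (_ : Continuous g) (_ : ∀ a, 0 ≤ g a) (a' : A),
        {π : ProbabilityMeasure (Θ × A) |
          0 ≤ ∫ z, g z.2 * (uR z.2 z.1 - uR a' z.1) ∂(π : Measure (Θ × A))} := by
    ext π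
    simp [Obed]
  rw [this]
  refine IsClosed.inter ?_ ?_
  · refine isClosed_iInter fun f => isClosed_iInter fun hf => ?_
    exact isClosed_eq (cont_integral (hf.comp continuous_fst)) continuous_const
  · refine isClosed_iInter fun g => isClosed_iInter fun hg => isClosed_iInter fun _ =>
      isClosed_iInter fun a' => ?_
    exact isClosed_le continuous_const
      (cont_integral ((test_cont hR hg a').comp continuous_swap))

lemma mean_dir (μ0 : ProbabilityMeasure Θ) : dir μ0 ∈ infoPolicies μ0 := by
  intro B hB
  exact integral_dirac' _ _ (pm_apply_meas measurable_id hB).ennreal_toReal.stronglyMeasurable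

lemma exists_max {uS uR : A → Θ → ℝ}
    (hS : Continuous fun p : A × Θ => uS p.1 p.2)
    (hR : Continuous fun p : A × Θ => uR p.1 p.2) (μ0 : ProbabilityMeasure Θ) :
    ∃ p ∈ infoPolicies μ0, ∀ q ∈ infoPolicies μ0,
      ∫ ν, vFun uS uR ν ∂(q : Measure (ProbabilityMeasure Θ))
        ≤ ∫ ν, vFun uS uR ν ∂(p : Measure (ProbabilityMeasure Θ)) := by
  obtain ⟨C, hC0, hC⟩ := u_bdd hS
  obtain ⟨CR, hCR0, hCR⟩ := u_bdd hR
  obtain ⟨s, hs, hsbr, hsv⟩ := v_sel hS hR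
  have key : ∀ q ∈ infoPolicies μ0, ∃ π ∈ Obed uR μ0,
      ∫ z, uS z.2 z.1 ∂(π : Measure (Θ × A))
        = ∫ ν, vFun uS uR ν ∂(q : Measure (ProbabilityMeasure Θ)) := by
    intro q hq
    have hm : Measurable (fun z : ProbabilityMeasure Θ × Θ => (z.2, s z.1)) := by fun_prop
    let J : Measure (Θ × A) := ((q : Measure (ProbabilityMeasure Θ)) ⊗ₘ
      toKer (fun ν : ProbabilityMeasure Θ => ν) measurable_id).map (fun z => (z.2, s z.1))
    have hJp : IsProbabilityMeasure J := Measure.isProbabilityMeasure_map hm.aemeasurable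
    have hJ : JRep J (q : Measure (ProbabilityMeasure Θ)) (fun ν => ν) measurable_id s := rfl
    have hfst : J.fst = μ0 := by
      rw [← (mean_iff μ0 (q : Measure (ProbabilityMeasure Θ)) (ν := fun ν => ν) measurable_id).1 hq,
        Measure.fst, Measure.map_map measurable_fst hm]
      rfl
    refine ⟨⟨J, hJp⟩, ⟨fun f hf => ?_, fun g hg hg0 a' => ?_⟩, ?_⟩
    · rw [← hfst, Measure.fst, integral_map measurable_fst.aemeasurable
        hf.aestronglyMeasurable]
      rfl
    · have := E_dir (u := fun a θ => g a * (uR a θ - uR a' θ)) (test_cont hR hg a') hs hJ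
      refine le_of_le_of_eq ?_ this.symm
      refine integral_nonneg fun ν => ?_
      rw [EU_test hR]
      exact mul_nonneg (hg0 _) (sub_nonneg.2 (hsbr ν a'))
    · refine (E_dir hS hs hJ).trans ?_
      simp_rw [hsv]
  have hne : (Obed uR μ0).Nonempty := by
    obtain ⟨π, hπ, -⟩ := key _ (mean_dir μ0)
    exact ⟨π, hπ⟩
  obtain ⟨π, hπ, hmax⟩ := (Obed_closed hR μ0).isCompact.exists_isMaxOn hne
    (cont_integral (hS.comp continuous_swap)).continuousOn
  obtain ⟨b, hb, hJ⟩ := exists_posterior (π : Measure (Θ × A))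
  have hfst : (π : Measure (Θ × A)).fst = μ0 := by
    refine ext_of_forall_integral_eq_of_IsFiniteMeasure fun f => ?_
    rw [← hπ.1 f f.continuous, Measure.fst, integral_map measurable_fst.aemeasurable
        f.continuous.aestronglyMeasurable]
  have hmean := mean_of_rep hfst measurable_id hJ
  have hob1 : ∀ a' : A, ∀ᵐ a ∂(π : Measure (Θ × A)).snd,
      0 ≤ senderEU uR (b a) a - senderEU uR (b a) a' := by
    intro a'
    refine ae_nonneg_of_test (C := CR + CR) ?_ ?_ ?_
    · exact ((EU_joint hR).comp (hb.prodMk measurable_id)).sub ((EU_meas hR a').comp hb)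
    · intro a
      exact (abs_sub _ _).trans (add_le_add (EU_bdd hCR _ _) (EU_bdd hCR _ _))
    · intro g hg hg0
      have := E_dir (u := fun a θ => g a * (uR a θ - uR a' θ)) (test_cont hR hg a') measurable_id hJ
      simp only [EU_test hR, id] at this
      rw [← this]
      exact hπ.2 g hg hg0 a'
  have hob : ∀ᵐ a ∂(π : Measure (Θ × A)).snd, a ∈ bestResponses uR (b a) := by
    have h1 : ∀ᵐ a ∂(π : Measure (Θ × A)).snd, ∀ n : ℕ,
      0 ≤ senderEU uR (b a) a - senderEU uR (b a) (TopologicalSpace.denseSeq A n) :=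
      ae_all_iff.2 fun n => hob1 _
    filter_upwards [h1] with a ha a'
    have hcl : IsClosed {a' | senderEU uR (b a) a' ≤ senderEU uR (b a) a} :=
      isClosed_le (EU_cont hR _) continuous_const
    exact (TopologicalSpace.denseRange_denseSeq A).induction_on (p := fun a' =>
      senderEU uR (b a) a' ≤ senderEU uR (b a) a) a' hcl (fun n => sub_nonneg.1 (ha n))
  refine ⟨_, info_of_mean hb hmean, fun q hq => ?_⟩
  obtain ⟨π', hπ', he⟩ := key q hq
  rw [← he]
  refine (hmax hπ').trans ?_
  change ∫ z, uS z.2 z.1 ∂(π : Measure (Θ × A)) ≤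
    ∫ ν, vFun uS uR ν ∂((π : Measure (Θ × A)).snd.map b)
  rw [integral_map hb.aemeasurable (v_meas hS hR).aestronglyMeasurable,
    E_dir hS measurable_id hJ]
  refine integral_mono_ae (int_bdd ((EU_joint hS).comp (hb.prodMk measurable_id))
      fun x => EU_bdd hC _ _)
      (int_bdd ((v_meas hS hR).comp hb) fun x => v_bdd hS hR hC _) ?_
  filter_upwards [hob] with a ha using le_v hS ha

end MaxExists
section Carath

variable {Θ : Type*} [Fintype Θ]

/-- Value pairs attainable by mixing `card Θ` points of `K`. -/
def Mix (K : Set ((Θ → ℝ) × ℝ)) : Set ((Θ → ℝ) × ℝ) :=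
  (fun q : (Θ → ℝ) × (Θ → (Θ → ℝ) × ℝ) => ∑ θ, q.1 θ • q.2 θ) ''
    (stdSimplex ℝ Θ ×ˢ Set.univ.pi fun _ => K)

lemma mix_compact {K : Set ((Θ → ℝ) × ℝ)} (hK : IsCompact K) : IsCompact (Mix K) := by
  refine ((isCompact_stdSimplex ℝ Θ).prod (isCompact_univ_pi fun _ => hK)).image ?_
  fun_prop

lemma drop_step (n : ℕ) (w t : Fin (n + 1) → ℝ) (x : Fin (n + 1) → Θ → ℝ)
    (hw : ∀ i, 0 ≤ w i) (hx : ∀ i, ∑ θ, x i θ = 1) (hn : Fintype.card Θ < n + 1) :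
    ∃ (w' : Fin (n + 1) → ℝ) (j : Fin (n + 1)), (∀ i, 0 ≤ w' i) ∧ w' j = 0 ∧
      ∑ i, w' i = ∑ i, w i ∧ ∑ i, w' i • x i = ∑ i, w i • x i ∧
      ∑ i, w i * t i ≤ ∑ i, w' i * t i := by
  have hnl : ¬ LinearIndependent ℝ x := by
    intro h
    have := h.fintype_card_le_finrank
    simp at this
    omega
  rw [Fintype.not_linearIndependent_iff] at hnl
  obtain ⟨g, hg, i0, hi0⟩ := hnl
  obtain ⟨g, hg, ⟨i0, hi0⟩, hgt⟩ : ∃ g : Fin (n + 1) → ℝ, ∑ i, g i • x i = 0 ∧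
      (∃ i, g i ≠ 0) ∧ 0 ≤ ∑ i, g i * t i := by
    rcases le_total 0 (∑ i, g i * t i) with h | h
    · exact ⟨g, hg, ⟨i0, hi0⟩, h⟩
    · refine ⟨fun i => - g i, ?_, ⟨i0, by simpa using hi0⟩, ?_⟩
      · simp only [neg_smul, Finset.sum_neg_distrib, hg, neg_zero]
      · simp only [neg_mul, Finset.sum_neg_distrib]; linarith
  have hsum : ∑ i, g i = 0 := by
    have h1 : ∑ θ, (∑ i, g i • x i) θ = 0 := by rw [hg]; simp
    simp only [Finset.sum_apply, Pi.smul_apply, smul_eq_mul] at h1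
    rw [Finset.sum_comm] at h1
    simpa [← Finset.mul_sum, hx] using h1
  have hneg : (Finset.univ.filter fun i => g i < 0).Nonempty := by
    by_contra hcon
    rw [Finset.not_nonempty_iff_eq_empty, Finset.filter_eq_empty_iff] at hcon
    have h0 : ∀ i ∈ Finset.univ, 0 ≤ g i := fun i hi => not_lt.1 (hcon hi)
    exact hi0 ((Finset.sum_eq_zero_iff_of_nonneg h0).1 hsum i0 (Finset.mem_univ _))
  obtain ⟨j, hj, hmin⟩ := Finset.exists_min_image _ (fun i => w i / (- g i)) hneg
  simp only [Finset.mem_filter, Finset.mem_univ, true_and] at hj hmin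
  set c := w j / (- g j) with hc
  have hc0 : 0 ≤ c := div_nonneg (hw j) (by linarith)
  refine ⟨fun i => w i + c * g i, j, fun i => ?_, ?_, ?_, ?_, ?_⟩
  · rcases lt_or_ge (g i) 0 with h | h
    · have := hmin i h
      rw [le_div_iff₀ (by linarith)] at this
      linarith
    · have := mul_nonneg hc0 h
      have := hw i
      positivity
  · have : g j ≠ 0 := hj.ne
    simp only [hc]
    field_simp
    ring
  · rw [Finset.sum_add_distrib, ← Finset.mul_sum, hsum]; simp
  · simp only [add_smul, Finset.sum_add_distrib, mul_smul, ← Finset.smul_sum, hg]; simp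
  · simp only [add_mul, Finset.sum_add_distrib, mul_assoc, ← Finset.mul_sum]
    have := mul_nonneg hc0 hgt
    linarith

lemma reduce_fin {K : Set ((Θ → ℝ) × ℝ)} (hK1 : ∀ k ∈ K, k.1 ∈ stdSimplex ℝ Θ) (n : ℕ) :
    ∀ (w : Fin n → ℝ) (k : Fin n → (Θ → ℝ) × ℝ), (∀ i, 0 ≤ w i) → ∑ i, w i = 1 →
      (∀ i, k i ∈ K) → ∃ y ∈ Mix K, y.1 = (∑ i, w i • k i).1 ∧ (∑ i, w i • k i).2 ≤ y.2 := by
  induction n with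
  | zero => intro w k _ h1; simp at h1
  | succ n ih =>
    intro w k hw h1 hk
    rcases le_or_gt (n + 1) (Fintype.card Θ) with hle | hgt
    · obtain ⟨e⟩ : Nonempty (Fin (n + 1) ↪ Θ) :=
        Function.Embedding.nonempty_of_card_le (by simpa using hle)
      have hex : ∀ i, Function.extend e w 0 (e i) = w i := e.injective.extend_apply w 0
      have hek : ∀ i, Function.extend e k (fun _ => k 0) (e i) = k i :=
        e.injective.extend_apply k _
      have h0 : ∀ θ, θ ∉ Set.range e → Function.extend e w 0 θ = 0 := fun θ hθ => by
        rw [Function.extend_apply' _ _ _ (by simpa using hθ)]; rfl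
      refine ⟨∑ i, w i • k i, ⟨(Function.extend e w 0, Function.extend e k fun _ => k 0),
        ⟨⟨fun θ => ?_, ?_⟩, fun θ _ => ?_⟩, ?_⟩, rfl, le_rfl⟩
      · by_cases h : θ ∈ Set.range e
        · obtain ⟨i, rfl⟩ := h; simp only [hex]; exact hw i
        · simp only [h0 θ h]; exact le_rfl
      · rw [← h1]
        symm
        refine Finset.sum_of_injOn e e.injective.injOn (by simp) ?_ ?_
        · intro θ _ hθ; exact h0 θ (by simpa using hθ)
        · intro i _; exact (hex i).symm
      · by_cases h : θ ∈ Set.range e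
        · obtain ⟨i, rfl⟩ := h; simp only [hek]; exact hk i
        · simp only; rw [Function.extend_apply' _ _ _ (by simpa using h)]; exact hk 0
      · symm
        refine Finset.sum_of_injOn e e.injective.injOn (by simp) ?_ ?_
        · intro θ _ hθ; simp only [h0 θ (by simpa using hθ), zero_smul]
        · intro i _; simp only [hex, hek]
    · obtain ⟨w', j, hw', hj, hs, hx, ht⟩ := drop_step n w (fun i => (k i).2) (fun i => (k i).1) hw
        (fun i => (hK1 _ (hk i)).2) hgt
      obtain ⟨y, hy, hy1, hy2⟩ := ih (fun i => w' (j.succAbove i)) (fun i => k (j.succAbove i))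
        (fun i => hw' _) (by
          rw [Fin.sum_univ_succAbove _ j, hj, zero_add] at hs
          rw [hs, h1]) (fun i => hk _)
      refine ⟨y, hy, ?_, ?_⟩
      · rw [Fin.sum_univ_succAbove _ j, hj, zero_smul, zero_add] at hx
        rw [hy1, Prod.fst_sum, Prod.fst_sum]
        exact hx
      · refine le_trans ?_ hy2
        rw [Fin.sum_univ_succAbove (fun i => w' i * _) j, hj, zero_mul, zero_add] at ht
        rw [Prod.snd_sum, Prod.snd_sum]
        exact ht

open scoped Pointwise in
lemma reduce_integral {N : Type*} [MeasurableSpace N] {p : Measure N} [IsProbabilityMeasure p]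
    {K : Set ((Θ → ℝ) × ℝ)} (hK : IsCompact K) (hK1 : ∀ k ∈ K, k.1 ∈ stdSimplex ℝ Θ)
    {Y : N → (Θ → ℝ) × ℝ} (hY : Integrable Y p) (hYK : ∀ x, Y x ∈ K) :
    ∃ l ∈ stdSimplex ℝ Θ, ∃ k : Θ → (Θ → ℝ) × ℝ, (∀ θ, k θ ∈ K) ∧
      ∑ θ, l θ • (k θ).1 = (∫ x, Y x ∂p).1 ∧ (∫ x, Y x ∂p).2 ≤ ∑ θ, l θ * (k θ).2 := by
  have h1 : ∫ x, Y x ∂p ∈ closure (convexHull ℝ K) :=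
    (convex_convexHull ℝ K).closure.integral_mem isClosed_closure
      (Eventually.of_forall fun x => subset_closure (subset_convexHull ℝ K (hYK x))) hY
  let D : Set ((Θ → ℝ) × ℝ) := {0} ×ˢ Set.Iic 0
  have hD : IsClosed D := isClosed_singleton.prod isClosed_Iic
  have hcl : IsClosed (Mix K + D) := hD.add_left_of_isCompact (mix_compact hK)
  have hsub : convexHull ℝ K ⊆ Mix K + D := by
    intro z hz
    obtain ⟨ι, _, w, k, hw, hw1, hk, rfl⟩ := mem_convexHull_iff_exists_fintype.1 hz
    let e := Fintype.equivFin ι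
    obtain ⟨y, hy, hy1, hy2⟩ := reduce_fin hK1 (Fintype.card ι) (w ∘ e.symm) (k ∘ e.symm)
      (fun i => hw _) (by rw [← hw1]; exact e.symm.sum_comp w) (fun i => hk _)
    have he : ∑ i, (w ∘ e.symm) i • (k ∘ e.symm) i = ∑ i, w i • k i :=
      e.symm.sum_comp fun i => w i • k i
    rw [he] at hy1 hy2
    refine Set.mem_add.2 ⟨y, hy, (0, (∑ i, w i • k i).2 - y.2), ⟨rfl, ?_⟩, ?_⟩
    · simpa using hy2
    · ext1
      · simp [hy1]
      · simp
  obtain ⟨y, ⟨⟨l, k⟩, ⟨hl, hk⟩, rfl⟩, d, ⟨hd1, hd2⟩, hyd⟩ :=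
    Set.mem_add.1 (closure_minimal hsub hcl h1)
  refine ⟨l, hl, k, fun θ => hk θ (Set.mem_univ _), ?_, ?_⟩
  · rw [← hyd, Prod.fst_add, hd1, add_zero, Prod.fst_sum]; rfl
  · rw [← hyd, Prod.snd_add, Prod.snd_sum]
    have : d.2 ≤ 0 := hd2
    simp only [Prod.smul_snd, smul_eq_mul]
    linarith

end Carath
section FiniteState

variable {A Θ M : Type*}
    [TopologicalSpace A] [CompactSpace A] [TopologicalSpace.MetrizableSpace A] [Nonempty A]
    [MeasurableSpace A] [BorelSpace A]
    [TopologicalSpace Θ] [CompactSpace Θ] [TopologicalSpace.MetrizableSpace Θ] [Nonempty Θ]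
    [MeasurableSpace Θ] [BorelSpace Θ] [Fintype Θ]

/-- Coordinates of a belief on a finite state space. -/
noncomputable def vec (ν : ProbabilityMeasure Θ) : Θ → ℝ :=
  fun θ => (ν : Measure Θ).real {θ}

lemma integral_vec (ν : ProbabilityMeasure Θ) (g : Θ → ℝ) :
    ∫ θ, g θ ∂(ν : Measure Θ) = ∑ θ, vec ν θ * g θ := by
  rw [integral_fintype (Integrable.of_finite)]
  rfl

lemma vec_mem (ν : ProbabilityMeasure Θ) : vec ν ∈ stdSimplex ℝ Θ := by
  refine ⟨fun θ => measureReal_nonneg, ?_⟩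
  have := integral_vec ν (fun _ => (1 : ℝ))
  simpa using this.symm

lemma exists_vec {x : Θ → ℝ} (hx : x ∈ stdSimplex ℝ Θ) : ∃ ν : ProbabilityMeasure Θ, vec ν = x := by
  let m : Measure Θ := ∑ θ, ENNReal.ofReal (x θ) • Measure.dirac θ
  have hm : ∀ B : Set Θ, MeasurableSet B → m B = ∑ θ, ENNReal.ofReal (x θ) * B.indicator 1 θ := by
    intro B hB
    simp only [m, Measure.finsetSum_apply, Measure.smul_apply, smul_eq_mul]
    simp only [Measure.dirac_apply' _ hB]
  have hp : IsProbabilityMeasure m := by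
    constructor
    rw [hm _ MeasurableSet.univ]
    simp only [Set.indicator_univ, Pi.one_apply, mul_one]
    rw [← ENNReal.ofReal_sum_of_nonneg fun θ _ => hx.1 θ, hx.2, ENNReal.ofReal_one]
  refine ⟨⟨m, hp⟩, ?_⟩
  funext θ
  change (m {θ}).toReal = x θ
  rw [hm _ (measurableSet_singleton θ), Finset.sum_eq_single θ]
  · simp [hx.1 θ]
  · intro b _ hb; simp [hb]
  · simp

lemma EU_vec (u : A → Θ → ℝ) (ν : ProbabilityMeasure Θ) (a : A) :
    senderEU u ν a = ∑ θ, vec ν θ * u a θ := integral_vec ν _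

lemma apply_vec (ν : ProbabilityMeasure Θ) {B : Set Θ} (hB : MeasurableSet B) :
    ((ν : Measure Θ) B).toReal = ∑ θ, vec ν θ * B.indicator 1 θ := by
  rw [← integral_vec, integral_indicator_one hB]; rfl

lemma vec_meas : Measurable (vec : ProbabilityMeasure Θ → Θ → ℝ) :=
  measurable_pi_lambda _ fun θ =>
    (pm_apply_meas measurable_id (measurableSet_singleton θ)).ennreal_toReal

lemma split_fin {μ0 : ProbabilityMeasure Θ} {p : ProbabilityMeasure (ProbabilityMeasure Θ)}
    (hp : p ∈ infoPolicies μ0) {T : ProbabilityMeasure Θ → ℝ} (hT : Measurable T)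
    {C : ℝ} (hC : ∀ ν, |T ν| ≤ C)
    {K : Set ((Θ → ℝ) × ℝ)} (hK : IsCompact K) (hK1 : ∀ k ∈ K, k.1 ∈ stdSimplex ℝ Θ)
    (hTK : ∀ ν, (vec ν, T ν) ∈ K) :
    ∃ (q : ProbabilityMeasure Θ) (ν : Θ → ProbabilityMeasure Θ) (t : Θ → ℝ),
      Mean μ0 (q : Measure Θ) ν ∧ (∀ θ, (vec (ν θ), t θ) ∈ K) ∧
      ∫ ν, T ν ∂(p : Measure (ProbabilityMeasure Θ)) ≤ ∫ θ, t θ ∂(q : Measure Θ) := by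
  have hTi : Integrable T (p : Measure (ProbabilityMeasure Θ)) := int_bdd hT hC
  have hvi : ∀ θ, Integrable (fun ν : ProbabilityMeasure Θ => vec ν θ)
      (p : Measure (ProbabilityMeasure Θ)) := fun θ =>
    int_bdd (C := 1) ((measurable_pi_apply θ).comp vec_meas) fun ν => by
      rw [abs_of_nonneg ((vec_mem ν).1 θ)]
      exact measureReal_le_one
  have hvi' : Integrable (fun ν : ProbabilityMeasure Θ => vec ν)
      (p : Measure (ProbabilityMeasure Θ)) := Integrable.of_eval hvi
  have hY := hvi'.prodMk hTi
  obtain ⟨l, hl, k, hk, h1, h2⟩ := reduce_integral hK hK1 hY hTK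
  rw [integral_pair hvi' hTi] at h1 h2
  simp only at h1 h2
  obtain ⟨q, hq⟩ := exists_vec hl
  choose ν hν using fun θ => exists_vec (hK1 _ (hk θ))
  refine ⟨q, ν, fun θ => (k θ).2, ?_, ?_, ?_⟩
  · have hcoord : ∀ b, ∑ θ, l θ * vec (ν θ) b = vec μ0 b := by
      intro b
      have h3 := congrFun h1 b
      rw [eval_integral hvi] at h3
      have h4 : ∫ ν, vec ν b ∂(p : Measure (ProbabilityMeasure Θ)) = vec μ0 b :=
        hp {b} (measurableSet_singleton b)
      rw [h4] at h3
      simp only [hν]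
      simpa using h3
    intro B hB
    rw [integral_vec, apply_vec μ0 hB, hq]
    simp only [apply_vec _ hB, Finset.mul_sum]
    rw [Finset.sum_comm]
    refine Finset.sum_congr rfl fun b _ => ?_
    rw [← hcoord b, Finset.sum_mul]
    refine Finset.sum_congr rfl fun θ _ => ?_
    ring
  · intro θ
    rw [hν]; exact hk θ
  · rw [integral_vec q, hq]; exact h2

variable [TopologicalSpace M] [PolishSpace M] [MeasurableSpace M] [BorelSpace M]

lemma att_fin (f : Θ → M) (hf : Function.Injective f) {uS uR : A → Θ → ℝ}
    (hS : Continuous fun p : A × Θ => uS p.1 p.2)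
    (hR : Continuous fun p : A × Θ => uR p.1 p.2)
    {μ0 : ProbabilityMeasure Θ} {p : ProbabilityMeasure (ProbabilityMeasure Θ)}
    (hp : p ∈ infoPolicies μ0) :
    ∃ ψ : Experiment Θ M, ∀ (b : M → ProbabilityMeasure Θ) (hb : Measurable b),
      JRep (joint μ0 ψ) (joint μ0 ψ).snd b hb id →
      ∫ ν, vFun uS uR ν ∂(p : Measure (ProbabilityMeasure Θ))
        ≤ ∫ m, vFun uS uR (b m) ∂(joint μ0 ψ).snd := by
  obtain ⟨C, hC0, hC⟩ := u_bdd hS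
  obtain ⟨s, hs, hsbr, hsv⟩ := v_sel hS hR
  have cS : ∀ θ, Continuous fun z : (Θ → ℝ) × A => z.1 θ * uS z.2 θ := fun θ =>
    ((continuous_apply θ).comp continuous_fst).mul
      (hS.comp (continuous_snd.prodMk continuous_const))
  have cR : ∀ a' : (Θ → ℝ) × A → A, Continuous a' → ∀ θ,
      Continuous fun z : (Θ → ℝ) × A => z.1 θ * uR (a' z) θ := fun a' ha' θ =>
    ((continuous_apply θ).comp continuous_fst).mul
      (hR.comp (ha'.prodMk continuous_const))
  let G : Set ((Θ → ℝ) × A) := (stdSimplex ℝ Θ ×ˢ Set.univ) ∩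
    ⋂ a' : A, {z | ∑ θ, z.1 θ * uR a' θ ≤ ∑ θ, z.1 θ * uR z.2 θ}
  have hG : IsCompact G := by
    refine ((isCompact_stdSimplex ℝ Θ).prod isCompact_univ).inter_right
      (isClosed_iInter fun a' => isClosed_le ?_ ?_)
    · exact continuous_finset_sum _ fun θ _ => cR (fun _ => a') continuous_const θ
    · exact continuous_finset_sum _ fun θ _ => cR (fun z => z.2) continuous_snd θ
  let K : Set ((Θ → ℝ) × ℝ) := (fun z : (Θ → ℝ) × A => (z.1, ∑ θ, z.1 θ * uS z.2 θ)) '' G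
  have hK : IsCompact K := hG.image
    (continuous_fst.prodMk (continuous_finset_sum _ fun θ _ => cS θ))
  obtain ⟨q, ν, t, hmean, hmem, hle⟩ := split_fin hp (v_meas hS hR) (v_bdd hS hR hC) hK
    (by rintro _ ⟨z, hz, rfl⟩; exact hz.1.1)
    (fun ν => ⟨(vec ν, s ν), ⟨⟨vec_mem ν, Set.mem_univ _⟩, Set.mem_iInter.2 fun a' => by
      have := hsbr ν a'
      change senderEU uR ν a' ≤ senderEU uR ν (s ν) at this
      rwa [EU_vec, EU_vec] at this⟩, by
      rw [← hsv, EU_vec]⟩)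
  choose z hzG hz using hmem
  have hz1 : ∀ θ, (z θ).1 = vec (ν θ) := fun θ => congrArg Prod.fst (hz θ)
  have hz2 : ∀ θ, senderEU uS (ν θ) (z θ).2 = t θ := fun θ => by
    rw [EU_vec, ← hz1]; exact congrArg Prod.snd (hz θ)
  have hbr : ∀ θ, (z θ).2 ∈ bestResponses uR (ν θ) := by
    intro θ a'
    change senderEU uR (ν θ) a' ≤ senderEU uR (ν θ) (z θ).2
    rw [EU_vec, EU_vec, ← hz1]
    exact Set.mem_iInter.1 (hzG θ).2 a'
  obtain ⟨ψ, hψ⟩ := core_fin f hf hS hR hmean hbr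
  refine ⟨ψ, fun b hb hJ => hle.trans ?_⟩
  have := (hψ b hb hJ).2
  simpa only [hz2] using this

lemma pen_cont {uS uR : A → Θ → ℝ}
    (hS : Continuous fun p : A × Θ => uS p.1 p.2)
    (hR : Continuous fun p : A × Θ => uR p.1 p.2) (k : ℕ) :
    Continuous fun x : Θ → ℝ => ⨅ a, ((∑ θ, x θ * uS a θ) +
      k * (- (⨅ a', ∑ θ, x θ * (- uR a' θ)) - ∑ θ, x θ * uR a θ)) := by
  have cc : ∀ {u : A → Θ → ℝ}, (Continuous fun p : A × Θ => u p.1 p.2) →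
      Continuous fun z : (Θ → ℝ) × A => ∑ θ, z.1 θ * u z.2 θ := fun hu =>
    continuous_finset_sum _ fun θ _ => ((continuous_apply θ).comp continuous_fst).mul
      (hu.comp (continuous_snd.prodMk continuous_const))
  have ci : ∀ F : (Θ → ℝ) → A → ℝ, Continuous (fun z : (Θ → ℝ) × A => F z.1 z.2) →
      Continuous fun x => ⨅ a, F x a := fun F hF => by
    have := IsCompact.continuous_sInf (f := F) (K := Set.univ) isCompact_univ hF
    simpa only [Set.image_univ, sInf_range] using this
  refine ci _ ((cc hS).add (continuous_const.mul (Continuous.sub (Continuous.neg ?_) (cc hR))))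
  exact (ci (fun x a' => ∑ θ, x θ * (- uR a' θ))
    (cc (u := fun a θ => - uR a θ) (hneg hR))).comp continuous_fst

lemma low_fin (f : Θ → M) (hf : Function.Injective f) {uS uR : A → Θ → ℝ}
    (hS : Continuous fun p : A × Θ => uS p.1 p.2)
    (hR : Continuous fun p : A × Θ => uR p.1 p.2)
    {μ0 : ProbabilityMeasure Θ} {p : ProbabilityMeasure (ProbabilityMeasure Θ)}
    (hp : p ∈ infoPolicies μ0) {ε : ℝ} (hε : 0 < ε) :
    ∃ ψ : Experiment Θ M, ∀ (b : M → ProbabilityMeasure Θ) (hb : Measurable b),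
      JRep (joint μ0 ψ) (joint μ0 ψ).snd b hb id →
      ∀ κ : M → ProbabilityMeasure A, Measurable κ →
        (∀ m, ∀ᵐ a ∂(κ m : Measure A), a ∈ bestResponses uR (b m)) →
        ∫ ν, wFun uS uR ν ∂(p : Measure (ProbabilityMeasure Θ)) - ε
          ≤ ∫ z, ∫ a, uS a z.1 ∂(κ z.2 : Measure A) ∂(joint μ0 ψ) := by
  obtain ⟨C, hC0, hC⟩ := u_bdd hS
  obtain ⟨s, hs, hsbr, hsw⟩ := w_sel hS hR
  let T : ℕ → ProbabilityMeasure Θ → ℝ := fun k ν =>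
    ⨅ a, (senderEU uS ν a + k * loss uR ν a)
  have hTw : ∀ k ν, T k ν ≤ wFun uS uR ν := fun k ν => by
    have := pen_le _ _ (EU_cont hS ν) (loss_cont hR ν) (loss_ex hR ν) k
    rw [← BR_eq hR] at this
    exact this
  have hTm : ∀ k, Measurable (T k) := fun k =>
    meas_iInf _ (fun a => (EU_meas hS a).add ((loss_meas hR a).const_mul _))
      (fun ν => (EU_cont hS ν).add (continuous_const.mul (loss_cont hR ν)))
  have hTC : ∀ k ν, |T k ν| ≤ C := fun k ν => by
    rw [abs_le]
    constructor
    · refine le_ciInf fun a => ?_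
      have h1 := (abs_le.1 (EU_bdd hC ν a)).1
      have h2 : 0 ≤ (k : ℝ) * loss uR ν a := mul_nonneg (Nat.cast_nonneg _) (loss_nonneg hR ν a)
      linarith
    · exact (hTw k ν).trans (abs_le.1 (w_bdd hS hR hC ν)).2
  have hlim : Tendsto (fun k => ∫ ν, T k ν ∂(p : Measure (ProbabilityMeasure Θ))) atTop
      (𝓝 (∫ ν, wFun uS uR ν ∂(p : Measure (ProbabilityMeasure Θ)))) := by
    refine tendsto_integral_of_dominated_convergence (fun _ => C)
      (fun k => (hTm k).aestronglyMeasurable) (integrable_const _)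
      (fun k => Eventually.of_forall (hTC k)) (Eventually.of_forall fun ν => ?_)
    have := pen_tendsto _ _ (EU_cont hS ν) (loss_cont hR ν) (loss_nonneg hR ν) (loss_ex hR ν)
    rw [← BR_eq hR] at this
    exact this
  obtain ⟨k, hk⟩ := (hlim.eventually (lt_mem_nhds (sub_lt_self _ hε))).exists
  let W : (Θ → ℝ) → ℝ := fun x => ⨅ a, ((∑ θ, x θ * uS a θ) +
      k * (- (⨅ a', ∑ θ, x θ * (- uR a' θ)) - ∑ θ, x θ * uR a θ))
  have hWT : ∀ ν, T k ν = W (vec ν) := fun ν => by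
    simp only [T, W, loss, EU_vec]
  have hK : IsCompact ((fun x => (x, W x)) '' stdSimplex ℝ Θ) :=
    (isCompact_stdSimplex ℝ Θ).image (continuous_id.prodMk (pen_cont hS hR k))
  obtain ⟨q, ν, t, hmean, hmem, hle⟩ := split_fin hp (hTm k) (hTC k) hK
    (by rintro _ ⟨z, hz, rfl⟩; exact hz)
    (fun ν => ⟨vec ν, vec_mem ν, by rw [hWT]⟩)
  have ht : ∀ θ, t θ ≤ wFun uS uR (ν θ) := by
    intro θ
    obtain ⟨x, hx, hxe⟩ := hmem θ
    have h1 : x = vec (ν θ) := congrArg Prod.fst hxe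
    have h2 : W x = t θ := congrArg Prod.snd hxe
    rw [← h2, h1, ← hWT]
    exact hTw _ _
  obtain ⟨ψ, hψ⟩ := core_fin f hf hS hR hmean (s := fun θ => s (ν θ)) (fun θ => hsbr _)
  refine ⟨ψ, fun b hb hJ κ hκ hbr => ?_⟩
  have h1 := (hψ b hb hJ).1 κ hκ hbr
  have h2 : ∫ θ, t θ ∂(q : Measure Θ) ≤ ∫ θ, wFun uS uR (ν θ) ∂(q : Measure Θ) :=
    integral_mono Integrable.of_finite Integrable.of_finite ht
  linarith

end FiniteState
section Assembly

variable {A Θ M : Type*}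
    [TopologicalSpace A] [CompactSpace A] [TopologicalSpace.MetrizableSpace A] [Nonempty A]
    [MeasurableSpace A] [BorelSpace A]
    [TopologicalSpace Θ] [CompactSpace Θ] [TopologicalSpace.MetrizableSpace Θ] [Nonempty Θ]
    [MeasurableSpace Θ] [BorelSpace Θ]
    [TopologicalSpace M] [PolishSpace M] [MeasurableSpace M] [BorelSpace M]

lemma att {uS uR : A → Θ → ℝ}
    (hS : Continuous fun p : A × Θ => uS p.1 p.2)
    (hR : Continuous fun p : A × Θ => uR p.1 p.2)
    (hM : Uncountable M ∨ (Finite Θ ∧ ∃ f : Θ → M, Function.Injective f))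
    {μ0 : ProbabilityMeasure Θ} {p : ProbabilityMeasure (ProbabilityMeasure Θ)}
    (hp : p ∈ infoPolicies μ0) :
    ∃ ψ : Experiment Θ M, ∀ (b : M → ProbabilityMeasure Θ) (hb : Measurable b),
      JRep (joint μ0 ψ) (joint μ0 ψ).snd b hb id →
      ∫ ν, vFun uS uR ν ∂(p : Measure (ProbabilityMeasure Θ))
        ≤ ∫ m, vFun uS uR (b m) ∂(joint μ0 ψ).snd := by
  rcases hM with hM | ⟨hfin, f, hf⟩
  · obtain ⟨s, hs, hsbr, hsv⟩ := v_sel hS hR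
    obtain ⟨ψ, hψ⟩ := core_unc (M := M) hS hR (ν := fun ν => ν) measurable_id
      (p := (p : Measure (ProbabilityMeasure Θ))) hp hs hsbr
    refine ⟨ψ, fun b hb hJ => ?_⟩
    have := (hψ b hb hJ).2
    simpa only [hsv] using this
  · have := Fintype.ofFinite Θ
    exact att_fin f hf hS hR hp

lemma low {uS uR : A → Θ → ℝ}
    (hS : Continuous fun p : A × Θ => uS p.1 p.2)
    (hR : Continuous fun p : A × Θ => uR p.1 p.2)
    (hM : Uncountable M ∨ (Finite Θ ∧ ∃ f : Θ → M, Function.Injective f))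
    {μ0 : ProbabilityMeasure Θ} {p : ProbabilityMeasure (ProbabilityMeasure Θ)}
    (hp : p ∈ infoPolicies μ0) {ε : ℝ} (hε : 0 < ε) :
    ∃ ψ : Experiment Θ M, ∀ (b : M → ProbabilityMeasure Θ) (hb : Measurable b),
      JRep (joint μ0 ψ) (joint μ0 ψ).snd b hb id →
      ∀ κ : M → ProbabilityMeasure A, Measurable κ →
        (∀ m, ∀ᵐ a ∂(κ m : Measure A), a ∈ bestResponses uR (b m)) →
        ∫ ν, wFun uS uR ν ∂(p : Measure (ProbabilityMeasure Θ)) - ε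
          ≤ ∫ z, ∫ a, uS a z.1 ∂(κ z.2 : Measure A) ∂(joint μ0 ψ) := by
  rcases hM with hM | ⟨hfin, f, hf⟩
  · obtain ⟨s, hs, hsbr, hsw⟩ := w_sel hS hR
    obtain ⟨ψ, hψ⟩ := core_unc (M := M) hS hR (ν := fun ν => ν) measurable_id
      (p := (p : Measure (ProbabilityMeasure Θ))) hp hs hsbr
    refine ⟨ψ, fun b hb hJ κ hκ hbr => ?_⟩
    have := (hψ b hb hJ).1 κ hκ hbr
    linarith
  · have := Fintype.ofFinite Θ
    exact low_fin f hf hS hR hp hε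

lemma le_vHat {uS uR : A → Θ → ℝ}
    (hS : Continuous fun p : A × Θ => uS p.1 p.2)
    (hR : Continuous fun p : A × Θ => uR p.1 p.2)
    {μ0 : ProbabilityMeasure Θ} {p : ProbabilityMeasure (ProbabilityMeasure Θ)}
    (hp : p ∈ infoPolicies μ0) :
    ∫ ν, vFun uS uR ν ∂(p : Measure (ProbabilityMeasure Θ)) ≤ vHat uS uR μ0 := by
  obtain ⟨C, hC0, hC⟩ := u_bdd hS
  refine le_csSup ⟨C, ?_⟩ ⟨p, hp, rfl⟩
  rintro _ ⟨q, -, rfl⟩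
  exact (abs_le.1 (abs_integral_le fun ν => v_bdd hS hR hC ν)).2

lemma le_wHat {uS uR : A → Θ → ℝ}
    (hS : Continuous fun p : A × Θ => uS p.1 p.2)
    (hR : Continuous fun p : A × Θ => uR p.1 p.2)
    {μ0 : ProbabilityMeasure Θ} {p : ProbabilityMeasure (ProbabilityMeasure Θ)}
    (hp : p ∈ infoPolicies μ0) :
    ∫ ν, wFun uS uR ν ∂(p : Measure (ProbabilityMeasure Θ)) ≤ wHat uS uR μ0 := by
  obtain ⟨C, hC0, hC⟩ := u_bdd hS
  refine le_csSup ⟨C, ?_⟩ ⟨p, hp, rfl⟩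
  rintro _ ⟨q, -, rfl⟩
  exact (abs_le.1 (abs_integral_le fun ν => w_bdd hS hR hC ν)).2

lemma post_v_le {uS uR : A → Θ → ℝ}
    (hS : Continuous fun p : A × Θ => uS p.1 p.2)
    (hR : Continuous fun p : A × Θ => uR p.1 p.2)
    {μ0 : ProbabilityMeasure Θ} {ψ : Experiment Θ M}
    {b : M → ProbabilityMeasure Θ} {hb : Measurable b}
    (hJ : JRep (joint μ0 ψ) (joint μ0 ψ).snd b hb id) :
    ∫ m, vFun uS uR (b m) ∂(joint μ0 ψ).snd ≤ vHat uS uR μ0 := by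
  have := le_vHat hS hR (info_of_mean hb (mean_of_rep (joint_fst μ0 ψ) measurable_id hJ))
  refine le_of_eq_of_le ?_ this
  exact (integral_map hb.aemeasurable (v_meas hS hR).aestronglyMeasurable).symm

lemma post_w_le {uS uR : A → Θ → ℝ}
    (hS : Continuous fun p : A × Θ => uS p.1 p.2)
    (hR : Continuous fun p : A × Θ => uR p.1 p.2)
    {μ0 : ProbabilityMeasure Θ} {ψ : Experiment Θ M}
    {b : M → ProbabilityMeasure Θ} {hb : Measurable b}
    (hJ : JRep (joint μ0 ψ) (joint μ0 ψ).snd b hb id) :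
    ∫ m, wFun uS uR (b m) ∂(joint μ0 ψ).snd ≤ wHat uS uR μ0 := by
  have := le_wHat hS hR (info_of_mean hb (mean_of_rep (joint_fst μ0 ψ) measurable_id hJ))
  refine le_of_eq_of_le ?_ this
  exact (integral_map hb.aemeasurable (w_meas hS hR).aestronglyMeasurable).symm

/-- Randomising between two actions. -/
noncomputable def mix2 (l : ℝ) (hl : 0 ≤ l) (hl1 : l ≤ 1) (a1 a0 : A) : ProbabilityMeasure A :=
  ⟨ENNReal.ofReal l • Measure.dirac a1 + ENNReal.ofReal (1 - l) • Measure.dirac a0, by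
    constructor
    simp only [Measure.add_apply, Measure.smul_apply, measure_univ, smul_eq_mul, mul_one]
    rw [← ENNReal.ofReal_add hl (by linarith)]
    simp⟩

lemma mix2_meas {l : ℝ} (hl : 0 ≤ l) (hl1 : l ≤ 1) {g1 g0 : M → A} (h1 : Measurable g1)
    (h0 : Measurable g0) : Measurable fun m => mix2 l hl hl1 (g1 m) (g0 m) := by
  refine meas_pm_of_coe ?_
  refine Measure.measurable_of_measurable_coe _ fun B hB => ?_
  change Measurable fun m => (ENNReal.ofReal l • Measure.dirac (g1 m)
    + ENNReal.ofReal (1 - l) • Measure.dirac (g0 m)) B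
  simp only [Measure.add_apply, Measure.smul_apply, smul_eq_mul]
  have e1 : Measurable fun m => Measure.dirac (g1 m) B :=
    (Measure.measurable_coe hB).comp (Measure.measurable_dirac.comp h1)
  have e0 : Measurable fun m => Measure.dirac (g0 m) B :=
    (Measure.measurable_coe hB).comp (Measure.measurable_dirac.comp h0)
  exact (e1.const_mul _).add (e0.const_mul _)

lemma mix2_ae {l : ℝ} (hl : 0 ≤ l) (hl1 : l ≤ 1) {a1 a0 : A} {S : Set A} (hS : MeasurableSet S)
    (h1 : a1 ∈ S) (h0 : a0 ∈ S) : (mix2 l hl hl1 a1 a0 : Measure A) S = 1 := by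
  change (ENNReal.ofReal l • Measure.dirac a1 + ENNReal.ofReal (1 - l) • Measure.dirac a0) S = 1
  simp only [Measure.add_apply, Measure.smul_apply, smul_eq_mul, Measure.dirac_apply' _ hS,
    Set.indicator_of_mem h1, Set.indicator_of_mem h0, Pi.one_apply, mul_one]
  rw [← ENNReal.ofReal_add hl (by linarith)]
  simp

lemma mix2_int {l : ℝ} (hl : 0 ≤ l) (hl1 : l ≤ 1) {a1 a0 : A} {g : A → ℝ} (hg : Continuous g) :
    ∫ a, g a ∂(mix2 l hl hl1 a1 a0 : Measure A) = l * g a1 + (1 - l) * g a0 := by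
  change ∫ a, g a ∂(ENNReal.ofReal l • Measure.dirac a1
    + ENNReal.ofReal (1 - l) • Measure.dirac a0) = _
  have hi : ∀ a, Integrable g (Measure.dirac a) := fun a => by
    obtain ⟨C, hC⟩ := (isCompact_range hg).exists_bound_of_continuousOn continuousOn_id
    exact int_bdd hg.measurable (C := C) fun a => hC (g a) ⟨a, rfl⟩
  rw [integral_add_measure ((hi _).smul_measure ENNReal.ofReal_ne_top)
    ((hi _).smul_measure ENNReal.ofReal_ne_top), integral_smul_measure, integral_smul_measure,
    integral_dirac' _ _ hg.stronglyMeasurable, integral_dirac' _ _ hg.stronglyMeasurable,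
    ENNReal.toReal_ofReal hl, ENNReal.toReal_ofReal (by linarith)]
  rfl

lemma eq_sub {uS uR : A → Θ → ℝ}
    (hS : Continuous fun p : A × Θ => uS p.1 p.2)
    (hR : Continuous fun p : A × Θ => uR p.1 p.2)
    (hM : Uncountable M ∨ (Finite Θ ∧ ∃ f : Θ → M, Function.Injective f))
    {μ0 : ProbabilityMeasure Θ} {ψ : Experiment Θ M}
    {α : M → Experiment Θ M → ProbabilityMeasure A}
    {β : M → Experiment Θ M → ProbabilityMeasure Θ} (h : IsEquilibrium uS uR μ0 ψ α β) :
    senderPayoff uS μ0 ψ α ∈ Set.Icc (wHat uS uR μ0) (vHat uS uR μ0) := by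
  obtain ⟨hα, hβ, hopt, hbr, hB⟩ := h
  obtain ⟨C, hC0, hC⟩ := u_bdd hS
  have hJ : ∀ ψ', JRep (joint μ0 ψ') (joint μ0 ψ').snd (fun m => β m ψ') (hβ ψ') id :=
    fun ψ' => (bayes_iff μ0 ψ' (hβ ψ')).1 (hB ψ')
  have hae : ∀ ψ' m, ∀ᵐ a ∂(α m ψ' : Measure A), a ∈ bestResponses uR (β m ψ') :=
    fun ψ' m => (mem_ae_iff_prob_eq_one (BR_ms hR _)).2 (hbr ψ' m)
  constructor
  · refine csSup_le (Set.Nonempty.image _ ⟨_, mean_dir μ0⟩) ?_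
    rintro _ ⟨p, hp, rfl⟩
    refine le_of_forall_sub_le fun ε hε => ?_
    obtain ⟨ψ', hψ'⟩ := low (M := M) hS hR hM hp hε
    refine (hψ' _ (hβ ψ') (hJ ψ') (fun m => α m ψ') (hα ψ') (hae ψ')).trans ?_
    rw [← payoff_eq hS μ0 ψ' α (hα ψ')]
    exact hopt ψ'
  · refine le_trans ?_ (post_v_le hS hR (hJ ψ))
    rw [payoff_eq hS μ0 ψ α (hα ψ), E_rep hS measurable_id (hJ ψ) (κ := fun m => α m ψ) (hα ψ)]
    refine integral_mono (EUκ_int hS (hα ψ) (hβ ψ))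
      (int_bdd ((v_meas hS hR).comp (hβ ψ)) fun m => v_bdd hS hR hC _) fun m => ?_
    have := integral_mono_ae (EU_int hS (α m ψ : Measure A) (β m ψ))
      (integrable_const (vFun uS uR (β m ψ))) (by
        filter_upwards [hae ψ m] with a ha using le_v hS ha)
    simpa using this

lemma sup_eq {uS uR : A → Θ → ℝ}
    (hS : Continuous fun p : A × Θ => uS p.1 p.2)
    (hR : Continuous fun p : A × Θ => uR p.1 p.2)
    (hM : Uncountable M ∨ (Finite Θ ∧ ∃ f : Θ → M, Function.Injective f))
    {μ0 : ProbabilityMeasure Θ} {s : ℝ} (hs : s ∈ Set.Icc (wHat uS uR μ0) (vHat uS uR μ0)) :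
    ∃ (ψ : Experiment Θ M) (α : M → Experiment Θ M → ProbabilityMeasure A)
        (β : M → Experiment Θ M → ProbabilityMeasure Θ),
      IsEquilibrium uS uR μ0 ψ α β ∧ s = senderPayoff uS μ0 ψ α := by
  classical
  have hne : Nonempty M := by
    rcases hM with hM | ⟨-, f, -⟩
    · infer_instance
    · exact ⟨f (Classical.arbitrary Θ)⟩
  obtain ⟨C, hC0, hC⟩ := u_bdd hS
  obtain ⟨p, hp, hpmax⟩ := exists_max hS hR μ0
  have hpv : vHat uS uR μ0 ≤ ∫ ν, vFun uS uR ν ∂(p : Measure (ProbabilityMeasure Θ)) := by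
    refine csSup_le (Set.Nonempty.image _ ⟨_, hp⟩) ?_
    rintro _ ⟨q, hq, rfl⟩
    exact hpmax q hq
  obtain ⟨ψ, hψ⟩ := att (M := M) hS hR hM hp
  obtain ⟨sv, hsv, hsvbr, hsvv⟩ := v_sel hS hR
  obtain ⟨sw, hsw, hswbr, hsww⟩ := w_sel hS hR
  choose b hb hJ using fun ψ' : Experiment Θ M => exists_posterior (joint μ0 ψ')
  set V := ∫ m, vFun uS uR (b ψ m) ∂(joint μ0 ψ).snd with hV
  set W := ∫ m, wFun uS uR (b ψ m) ∂(joint μ0 ψ).snd with hW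
  have hVs : s ≤ V := hs.2.trans (hpv.trans (hψ _ _ (hJ ψ)))
  have hWs : W ≤ s := (post_w_le hS hR (hJ ψ)).trans hs.1
  obtain ⟨l, hl, hl1, hls⟩ : ∃ l : ℝ, 0 ≤ l ∧ l ≤ 1 ∧ l * V + (1 - l) * W = s := by
    have : s ∈ segment ℝ W V := by
      rw [segment_eq_Icc (hWs.trans hVs)]; exact ⟨hWs, hVs⟩
    obtain ⟨x, y, hx, hy, hxy, he⟩ := this
    refine ⟨y, hy, by linarith, ?_⟩
    have : x = 1 - y := by linarith
    rw [← he, this]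
    simp only [smul_eq_mul]
    ring
  let α : M → Experiment Θ M → ProbabilityMeasure A := fun m ψ' =>
    if ψ' = ψ then mix2 l hl hl1 (sv (b ψ' m)) (sw (b ψ' m)) else dir (sw (b ψ' m))
  have hαψ : ∀ m, α m ψ = mix2 l hl hl1 (sv (b ψ m)) (sw (b ψ m)) := fun m => if_pos rfl
  have hαn : ∀ ψ', ψ' ≠ ψ → ∀ m, α m ψ' = dir (sw (b ψ' m)) := fun ψ' h m => if_neg h
  have hαm : ∀ ψ', Measurable fun m => α m ψ' := by
    intro ψ'
    by_cases h : ψ' = ψ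
    · subst h
      simp only [hαψ]
      exact mix2_meas hl hl1 (hsv.comp (hb _)) (hsw.comp (hb _))
    · simp only [hαn ψ' h]
      exact dir_meas (hsw.comp (hb _))
  have hpay : senderPayoff uS μ0 ψ α = s := by
    rw [payoff_eq hS μ0 ψ α (hαm ψ), E_rep hS measurable_id (hJ ψ) (κ := fun m => α m ψ) (hαm ψ)]
    simp only [id, hαψ, mix2_int hl hl1 (EU_cont hS _), hsvv, hsww]
    rw [integral_add, integral_const_mul, integral_const_mul]
    · exact hls
    · exact (int_bdd ((v_meas hS hR).comp (hb ψ)) fun m => v_bdd hS hR hC _).const_mul _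
    · exact (int_bdd ((w_meas hS hR).comp (hb ψ)) fun m => w_bdd hS hR hC _).const_mul _
  refine ⟨ψ, α, fun m ψ' => b ψ' m, ⟨hαm, hb, fun ψ' => ?_, fun ψ' m => ?_, fun ψ' => ?_⟩, hpay.symm⟩
  · by_cases h : ψ' = ψ
    · rw [h]
    · rw [hpay, payoff_eq hS μ0 ψ' α (hαm ψ'),
        E_rep hS measurable_id (hJ ψ') (κ := fun m => α m ψ') (hαm ψ')]
      simp only [id, hαn ψ' h, int_dir hS, hsww]
      exact (post_w_le hS hR (hJ ψ')).trans hs.1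
  · change (α m ψ' : Measure A) (bestResponses uR (b ψ' m)) = 1
    by_cases h : ψ' = ψ
    · subst h
      rw [hαψ]
      exact mix2_ae hl hl1 (BR_ms hR _) (hsvbr _) (hswbr _)
    · rw [hαn ψ' h]
      exact (mem_ae_iff_prob_eq_one (BR_ms hR _)).1 ((ae_dir hR).2 (hswbr _))
  · exact (bayes_iff μ0 ψ' (hb ψ')).2 (hJ ψ')

end Assembly

/-- **Payoff set (Proposition 0).** The set of equilibrium sender payoffs equals the
closed interval `[ŵ(μ0), v̂(μ0)]`. -/
theorem equilibrium_payoff_set_eq_Icc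
    {A Θ M : Type*}
    [TopologicalSpace A] [CompactSpace A] [TopologicalSpace.MetrizableSpace A] [Nonempty A]
    [MeasurableSpace A] [BorelSpace A]
    [TopologicalSpace Θ] [CompactSpace Θ] [TopologicalSpace.MetrizableSpace Θ] [Nonempty Θ]
    [MeasurableSpace Θ] [BorelSpace Θ]
    [TopologicalSpace M] [PolishSpace M] [MeasurableSpace M] [BorelSpace M]
    (uS uR : A → Θ → ℝ)
    (hS : Continuous fun p : A × Θ => uS p.1 p.2)
    (hR : Continuous fun p : A × Θ => uR p.1 p.2)
    (hM : Uncountable M ∨ (Finite Θ ∧ ∃ f : Θ → M, Function.Injective f))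
    (μ0 : ProbabilityMeasure Θ) :
    {s : ℝ | ∃ (ψ : Experiment Θ M) (α : M → Experiment Θ M → ProbabilityMeasure A)
        (β : M → Experiment Θ M → ProbabilityMeasure Θ),
      IsEquilibrium uS uR μ0 ψ α β ∧ s = senderPayoff uS μ0 ψ α}
      = Set.Icc (wHat uS uR μ0) (vHat uS uR μ0) := by
  ext s
  constructor
  · rintro ⟨ψ, α, β, h, rfl⟩
    exact eq_sub hS hR hM h
  · intro hs
    exact sup_eq hS hR hM hs
end

section
/- ŵ(μ) = v̂(μ) holds for every prior μ ∈ ΔΘ if and only if ŵ(μ) ≥ v(μ) for every μ ∈ ΔΘ. (That is, the sender has a unique equilibrium payoff at every prior if and only if ŵ ≥ v pointwise.) -/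
open MeasureTheory


open Filter Topology Set
open scoped ENNReal

set_option linter.unusedSectionVars false

namespace UP

lemma measurable_coe {Ω : Type*} [MeasurableSpace Ω] :
    Measurable (fun μ : ProbabilityMeasure Ω => (μ : Measure Ω)) :=
  comap_measurable _

lemma measurable_mk {X Ω : Type*} [MeasurableSpace X] [MeasurableSpace Ω]
    {g : X → ProbabilityMeasure Ω} (h : Measurable fun x => (g x : Measure Ω)) : Measurable g :=
  measurable_comap_iff.2 h

lemma mem_info_iff {Θ : Type*} [MeasurableSpace Θ] (μ : ProbabilityMeasure Θ)
    (p : ProbabilityMeasure (ProbabilityMeasure Θ)) :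
    p ∈ infoPolicies μ ↔
      (p : Measure (ProbabilityMeasure Θ)).bind (fun ν => (ν : Measure Θ)) = (μ : Measure Θ) := by
  have key : ∀ B : Set Θ, MeasurableSet B →
      ∫ ν, ((ν : Measure Θ) B).toReal ∂(p : Measure (ProbabilityMeasure Θ)) =
      ((p : Measure (ProbabilityMeasure Θ)).bind (fun ν => (ν : Measure Θ)) B).toReal := by
    intro B hB
    rw [Measure.bind_apply hB measurable_coe.aemeasurable, integral_toReal]
    · exact ((Measure.measurable_coe hB).comp measurable_coe).aemeasurable
    · exact Eventually.of_forall fun ν => measure_lt_top _ _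
  have hfin : ∀ B : Set Θ, MeasurableSet B →
      (p : Measure (ProbabilityMeasure Θ)).bind (fun ν => (ν : Measure Θ)) B ≠ ∞ := by
    intro B hB
    rw [Measure.bind_apply hB measurable_coe.aemeasurable]
    refine ne_of_lt (lt_of_le_of_lt (lintegral_mono (g := fun _ => 1) fun ν => prob_le_one) ?_)
    simp
  constructor
  · intro h
    ext B hB
    have := h B hB
    rw [key B hB] at this
    exact (ENNReal.toReal_eq_toReal_iff' (hfin B hB) (measure_ne_top _ _)).1 this
  · intro h B hB
    rw [key B hB, h]

/-- A measure of mass one as a bundled probability measure. -/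
def mkP {Ω : Type*} [MeasurableSpace Ω] (μ : Measure Ω) (h : IsProbabilityMeasure μ) :
    ProbabilityMeasure Ω := ⟨μ, h⟩

@[simp] lemma mkP_coe {Ω : Type*} [MeasurableSpace Ω] (μ : Measure Ω)
    (h : IsProbabilityMeasure μ) : (mkP μ h : Measure Ω) = μ := rfl

lemma dirac_mem {Θ : Type*} [MeasurableSpace Θ] (μ : ProbabilityMeasure Θ) :
    mkP (Measure.dirac μ) inferInstance ∈ infoPolicies μ := by
  rw [mem_info_iff]
  exact Measure.dirac_bind measurable_coe μ

lemma fatou {X : Type*} [TopologicalSpace X] [MeasurableSpace X] (p : Measure X)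
    [IsProbabilityMeasure p] {F : X → ℝ} (hF : LowerSemicontinuous F) (hFm : Measurable F)
    {C : ℝ} (hC : ∀ x, |F x| ≤ C) (g : ℕ → X → X) (hg : ∀ n, Measurable (g n))
    (hlim : ∀ᵐ x ∂p, Tendsto (fun n => g n x) atTop (𝓝 x)) {r : ℝ}
    (hr : ∀ᶠ n in atTop, ∫ x, F (g n x) ∂p ≤ r) : ∫ x, F x ∂p ≤ r := by
  have hC0 : ∀ x, 0 ≤ F x + C := fun x => by linarith [neg_abs_le (F x), hC x]
  set Φ : X → ℝ≥0∞ := fun x => ENNReal.ofReal (F x + C) with hΦ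
  have hΦl : LowerSemicontinuous Φ := by
    have h1 : Continuous fun t : ℝ => ENNReal.ofReal (t + C) :=
      ENNReal.continuous_ofReal.comp (continuous_id.add continuous_const)
    exact h1.comp_lowerSemicontinuous hF
      (fun a b hab => ENNReal.ofReal_le_ofReal (by linarith))
  have hΦm : Measurable Φ := by fun_prop
  have hIntg : ∀ h : X → X, Measurable h → Integrable (fun x => F (h x)) p := fun h hh =>
    Integrable.of_bound (hFm.comp hh).aestronglyMeasurable C
      (Eventually.of_forall fun x => by simpa using hC (h x))
  have hval : ∀ h : X → X, Measurable h →
      ∫⁻ x, Φ (h x) ∂p = ENNReal.ofReal (∫ x, F (h x) ∂p + C) := by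
    intro h hh
    have : ∫ x, F (h x) ∂p + C = ∫ x, (F (h x) + C) ∂p := by
      rw [integral_add (hIntg h hh) (integrable_const _)]; simp
    have hi : Integrable (fun x => F (h x) + C) p := (hIntg h hh).add (integrable_const _)
    rw [this, ofReal_integral_eq_lintegral_ofReal hi]
    exact Eventually.of_forall fun x => hC0 _
  have h1 : ∫⁻ x, Φ x ∂p ≤ ∫⁻ x, liminf (fun n => Φ (g n x)) atTop ∂p := by
    apply lintegral_mono_ae
    filter_upwards [hlim] with x hx
    exact (hΦl.le_liminf x).trans (liminf_le_liminf_of_le hx)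
  have h2 := h1.trans (lintegral_liminf_le fun n => hΦm.comp (hg n))
  have h3 : liminf (fun n => ∫⁻ x, Φ (g n x) ∂p) atTop ≤ ENNReal.ofReal (r + C) := by
    apply liminf_le_of_frequently_le'
    refine Eventually.frequently ?_
    filter_upwards [hr] with n hn
    rw [hval _ (hg n)]
    exact ENNReal.ofReal_le_ofReal (by linarith)
  have h4 := h2.trans h3
  have h5 := hval id measurable_id
  simp only [id] at h5
  rw [h5] at h4
  obtain ⟨n, hn⟩ := hr.exists
  have hlow : ∀ h : X → X, Measurable h → 0 ≤ ∫ x, F (h x) ∂p + C := by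
    intro h hh
    have : ∫ x, F (h x) ∂p + C = ∫ x, (F (h x) + C) ∂p := by
      rw [integral_add (hIntg h hh) (integrable_const _)]; simp
    rw [this]
    exact integral_nonneg fun x => hC0 _
  have h6 := (ENNReal.ofReal_le_ofReal_iff (by linarith [hlow _ (hg n)])).1 h4
  linarith

section tests
variable {Θ : Type*} [TopologicalSpace Θ] [CompactSpace Θ] [TopologicalSpace.MetrizableSpace Θ]
  [MeasurableSpace Θ] [BorelSpace Θ]

lemma integrable_cont (f : C(Θ, ℝ)) (ν : Measure Θ) [IsFiniteMeasure ν] : Integrable f ν :=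
  Integrable.of_bound f.continuous.measurable.aestronglyMeasurable ‖f‖
    (Eventually.of_forall fun x => f.norm_coe_le_norm x)

lemma tendsto_iff_cont {γ : Type*} {F : Filter γ} {u : γ → ProbabilityMeasure Θ}
    {x : ProbabilityMeasure Θ} :
    Tendsto u F (𝓝 x) ↔ ∀ f : C(Θ, ℝ),
      Tendsto (fun i => ∫ θ, f θ ∂(u i : Measure Θ)) F (𝓝 (∫ θ, f θ ∂(x : Measure Θ))) := by
  rw [ProbabilityMeasure.tendsto_iff_forall_integral_tendsto]
  constructor
  · intro h f
    exact h (BoundedContinuousFunction.mkOfCompact f)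
  · intro h f
    exact h f.toContinuousMap

lemma abs_integral_sub_le (f g : C(Θ, ℝ)) (ν : ProbabilityMeasure Θ) :
    |∫ θ, f θ ∂(ν : Measure Θ) - ∫ θ, g θ ∂(ν : Measure Θ)| ≤ ‖f - g‖ := by
  rw [← integral_sub (integrable_cont f _) (integrable_cont g _)]
  have := norm_integral_le_of_norm_le_const (μ := (ν : Measure Θ)) (f := fun θ => f θ - g θ)
    (C := ‖f - g‖) (Eventually.of_forall fun θ => (f - g).norm_coe_le_norm θ)
  simpa using this

lemma continuous_integral_joint :
    Continuous fun q : C(Θ, ℝ) × ProbabilityMeasure Θ => ∫ θ, q.1 θ ∂(q.2 : Measure Θ) := by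
  rw [continuous_iff_continuousAt]
  rintro ⟨f, ν⟩
  rw [ContinuousAt, Metric.tendsto_nhds]
  intro ε hε
  have h1 : ∀ᶠ ν' : ProbabilityMeasure Θ in 𝓝 ν,
      dist (∫ θ, f θ ∂(ν' : Measure Θ)) (∫ θ, f θ ∂(ν : Measure Θ)) < ε / 2 :=
    Metric.tendsto_nhds.1 (tendsto_iff_cont.1 tendsto_id f) _ (by positivity)
  have h2 : ∀ᶠ f' in 𝓝 f, dist f' f < ε / 2 := Metric.ball_mem_nhds _ (by positivity)
  rw [nhds_prod_eq]
  filter_upwards [h2.prod_mk h1] with q hq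
  have h3 := abs_integral_sub_le q.1 f q.2
  rw [← dist_eq_norm, ← Real.dist_eq] at h3
  have := dist_triangle (∫ θ, q.1 θ ∂(q.2 : Measure Θ)) (∫ θ, f θ ∂(q.2 : Measure Θ))
    (∫ θ, f θ ∂(ν : Measure Θ))
  linarith [hq.1, hq.2]

lemma exists_tests : ∃ h : ℕ → C(Θ, ℝ), (∀ j θ, 0 ≤ h j θ) ∧ (∀ j θ, h j θ ≤ 1) ∧
    ∀ (x : ProbabilityMeasure Θ) (F : Filter (ProbabilityMeasure Θ)),
    (∀ j, Tendsto (fun ν : ProbabilityMeasure Θ => ∫ θ, h j θ ∂(ν : Measure Θ)) F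
      (𝓝 (∫ θ, h j θ ∂(x : Measure Θ)))) → F ≤ 𝓝 x := by
  let f := TopologicalSpace.denseSeq C(Θ, ℝ)
  have hd : DenseRange f := TopologicalSpace.denseRange_denseSeq _
  have hpos : ∀ j, 0 < 2 * ‖f j‖ + 1 := fun j => by positivity
  have hb : ∀ j θ, |f j θ| ≤ ‖f j‖ := fun j θ => (f j).norm_coe_le_norm θ
  refine ⟨fun j => ⟨fun θ => (f j θ + ‖f j‖) / (2 * ‖f j‖ + 1), by fun_prop⟩, ?_, ?_, ?_⟩
  · intro j θ
    have := abs_le.1 (hb j θ)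
    exact div_nonneg (by linarith) (hpos j).le
  · intro j θ
    have := abs_le.1 (hb j θ)
    exact (div_le_one (hpos j)).2 (by linarith)
  · intro x F h
    change Tendsto id F (𝓝 x)
    have key : ∀ j (ν : ProbabilityMeasure Θ), ∫ θ, f j θ ∂(ν : Measure Θ) =
        (2 * ‖f j‖ + 1) * (∫ θ, (f j θ + ‖f j‖) / (2 * ‖f j‖ + 1) ∂(ν : Measure Θ)) - ‖f j‖ := by
      intro j ν
      rw [integral_div, integral_add (integrable_cont _ _) (integrable_const _)]
      have := (hpos j).ne'
      simp
      field_simp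
      ring
    have h' : ∀ j, Tendsto (fun ν : ProbabilityMeasure Θ => ∫ θ, f j θ ∂(ν : Measure Θ)) F
        (𝓝 (∫ θ, f j θ ∂(x : Measure Θ))) := by
      intro j
      simp only [key j]
      exact ((h j).const_mul _).sub_const _
    rw [tendsto_iff_cont]
    intro g
    rw [Metric.tendsto_nhds]
    intro ε hε
    obtain ⟨j, hj⟩ := hd.exists_dist_lt g (show 0 < ε / 3 by positivity)
    filter_upwards [Metric.tendsto_nhds.1 (h' j) (ε / 3) (by positivity)] with i hi
    have h1 := abs_integral_sub_le g (f j) i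
    have h2 := abs_integral_sub_le g (f j) x
    rw [← dist_eq_norm] at h1 h2
    rw [Real.dist_eq] at hi ⊢
    have a1 := abs_le.1 (h1.trans hj.le)
    have a2 := abs_le.1 (h2.trans hj.le)
    have a3 := abs_lt.1 hi
    simp only [id]
    rw [abs_lt]
    constructor <;> linarith

lemma measurable_integral (f : C(Θ, ℝ)) :
    Measurable fun ν : ProbabilityMeasure Θ => ∫ θ, f θ ∂(ν : Measure Θ) := by
  have h : ∀ ν : ProbabilityMeasure Θ, ∫ θ, f θ ∂(ν : Measure Θ) =
      (∫⁻ θ, ENNReal.ofReal (f θ) ∂(ν : Measure Θ)).toReal -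
      (∫⁻ θ, ENNReal.ofReal (-f θ) ∂(ν : Measure Θ)).toReal := fun ν =>
    integral_eq_lintegral_pos_part_sub_lintegral_neg_part (integrable_cont f _)
  simp only [h]
  have hm : Measurable f := f.continuous.measurable
  exact (((Measure.measurable_lintegral hm.ennreal_ofReal).comp measurable_coe).ennreal_toReal).sub
    (((Measure.measurable_lintegral hm.neg.ennreal_ofReal).comp measurable_coe).ennreal_toReal)

instance opensMeasurable : OpensMeasurableSpace (ProbabilityMeasure Θ) := by
  obtain ⟨h, -, -, hh⟩ := exists_tests (Θ := Θ)
  let Φ : ProbabilityMeasure Θ → ℕ → ℝ := fun ν j => ∫ θ, h j θ ∂(ν : Measure Θ)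
  have hind : Topology.IsInducing Φ := by
    rw [isInducing_iff_nhds]
    intro x
    apply le_antisymm
    · rw [← tendsto_iff_comap, tendsto_pi_nhds]
      intro j
      exact tendsto_iff_cont.1 tendsto_id (h j)
    · refine hh x _ ?_
      intro j
      exact ((continuous_apply j).tendsto (Φ x)).comp tendsto_comap
  have hm : Measurable Φ := measurable_pi_lambda _ fun j => measurable_integral (h j)
  refine ⟨MeasurableSpace.generateFrom_le ?_⟩
  intro s hs
  obtain ⟨t, ht, rfl⟩ := hind.isOpen_iff.1 hs
  exact hm ht.measurableSet

end tests

/-- The concavification of a function on beliefs. -/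
noncomputable def hat {Θ : Type*} [MeasurableSpace Θ] (F : ProbabilityMeasure Θ → ℝ)
    (μ : ProbabilityMeasure Θ) : ℝ :=
  sSup ((fun p : ProbabilityMeasure (ProbabilityMeasure Θ) =>
    ∫ ν, F ν ∂(p : Measure (ProbabilityMeasure Θ))) '' infoPolicies μ)

section mix
variable {Θ : Type*} [MeasurableSpace Θ] {F : ProbabilityMeasure Θ → ℝ} {C : ℝ}

lemma abs_int_le {X : Type*} [MeasurableSpace X] {F : X → ℝ} {C : ℝ}
    (hC : ∀ ν, |F ν| ≤ C) (p : Measure X) [IsProbabilityMeasure p] :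
    |∫ ν, F ν ∂p| ≤ C := by
  have := norm_integral_le_of_norm_le_const (μ := p) (f := F) (C := C)
    (Eventually.of_forall hC)
  simpa using this

lemma integrable_bdd {X : Type*} [MeasurableSpace X] {F : X → ℝ} {C : ℝ} (hF : Measurable F)
    (hC : ∀ ν, |F ν| ≤ C) (p : Measure X) [IsFiniteMeasure p] : Integrable F p :=
  Integrable.of_bound hF.aestronglyMeasurable C (Eventually.of_forall hC)

lemma le_hat (hC : ∀ ν, |F ν| ≤ C) {μ : ProbabilityMeasure Θ}
    {p : ProbabilityMeasure (ProbabilityMeasure Θ)} (hp : p ∈ infoPolicies μ) :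
    ∫ ν, F ν ∂(p : Measure (ProbabilityMeasure Θ)) ≤ hat F μ := by
  refine le_csSup ⟨C, ?_⟩ ⟨p, hp, rfl⟩
  rintro _ ⟨q, -, rfl⟩
  exact (abs_le.1 (abs_int_le hC _)).2

lemma hat_le {μ : ProbabilityMeasure Θ} {r : ℝ} (h : ∀ p ∈ infoPolicies μ,
    ∫ ν, F ν ∂(p : Measure (ProbabilityMeasure Θ)) ≤ r) : hat F μ ≤ r := by
  refine csSup_le ⟨_, _, dirac_mem μ, rfl⟩ ?_
  rintro _ ⟨q, hq, rfl⟩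
  exact h q hq

lemma exists_lt_of_lt_hat {μ : ProbabilityMeasure Θ} {r : ℝ} (h : r < hat F μ) :
    ∃ p ∈ infoPolicies μ, r < ∫ ν, F ν ∂(p : Measure (ProbabilityMeasure Θ)) := by
  by_contra! hcon
  exact absurd (hat_le hcon) (not_le.2 h)

lemma abs_hat_le (hC : ∀ ν, |F ν| ≤ C) (μ : ProbabilityMeasure Θ) : |hat F μ| ≤ C := by
  rw [abs_le]
  constructor
  · exact (abs_le.1 (abs_int_le hC _)).1.trans (le_hat hC (dirac_mem μ))
  · exact hat_le fun p _ => (abs_le.1 (abs_int_le hC _)).2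

lemma sum_weights {ι : Type*} [Fintype ι] {c : ι → ℝ≥0∞} {b : ι → ProbabilityMeasure Θ}
    {μ : ProbabilityMeasure Θ} (hμ : ∑ i, c i • (b i : Measure Θ) = (μ : Measure Θ)) :
    ∑ i, c i = 1 := by
  have := congrArg (fun m : Measure Θ => m univ) hμ
  simpa [Measure.finsetSum_apply] using this

lemma sum_weights_real {ι : Type*} [Fintype ι] {c : ι → ℝ≥0∞} {b : ι → ProbabilityMeasure Θ}
    {μ : ProbabilityMeasure Θ} (hμ : ∑ i, c i • (b i : Measure Θ) = (μ : Measure Θ)) :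
    ∑ i, (c i).toReal = 1 ∧ ∀ i, c i ≠ ∞ := by
  have h := sum_weights hμ
  have hne : ∀ i, c i ≠ ∞ := fun i =>
    ne_top_of_le_ne_top (by rw [h]; simp) (Finset.single_le_sum (f := c)
      (fun _ _ => zero_le) (Finset.mem_univ i))
  refine ⟨?_, hne⟩
  rw [← ENNReal.toReal_sum fun i _ => hne i, h]
  simp

lemma mixture (hF : Measurable F) (hC : ∀ ν, |F ν| ≤ C) {ι : Type*} [Fintype ι] (c : ι → ℝ≥0∞)
    (b : ι → ProbabilityMeasure Θ) (q : ι → ProbabilityMeasure (ProbabilityMeasure Θ))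
    (hq : ∀ i, q i ∈ infoPolicies (b i)) (μ : ProbabilityMeasure Θ)
    (hμ : ∑ i, c i • (b i : Measure Θ) = (μ : Measure Θ)) :
    ∑ i, (c i).toReal * ∫ ν, F ν ∂(q i : Measure (ProbabilityMeasure Θ)) ≤ hat F μ := by
  have h1 := sum_weights hμ
  obtain ⟨-, hne⟩ := sum_weights_real hμ
  let Q : Measure (ProbabilityMeasure Θ) := ∑ i, c i • (q i : Measure (ProbabilityMeasure Θ))
  have hQ : IsProbabilityMeasure Q := ⟨by simp [Q, Measure.finsetSum_apply, h1]⟩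
  have hmem : mkP Q hQ ∈ infoPolicies μ := by
    rw [mem_info_iff]
    ext B hB
    rw [Measure.bind_apply hB measurable_coe.aemeasurable, mkP_coe, ← hμ]
    rw [lintegral_finsetSum_measure, Measure.finsetSum_apply]
    refine Finset.sum_congr rfl fun i _ => ?_
    rw [lintegral_smul_measure, ← Measure.bind_apply hB measurable_coe.aemeasurable,
      (mem_info_iff _ _).1 (hq i)]
    simp
  refine le_trans (le_of_eq ?_) (le_hat hC hmem)
  have hfin : ∀ i, IsFiniteMeasure (c i • (q i : Measure (ProbabilityMeasure Θ))) := fun i =>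
    ⟨by simpa using (hne i).lt_top⟩
  rw [mkP_coe, integral_finsetSum_measure]
  · simp
  · intro i _
    exact integrable_bdd hF hC _

end mix

section pou
variable {Θ : Type*} [MetricSpace Θ] [CompactSpace Θ]

lemma exists_pou {r : ℝ} (hr : 0 < r) : ∃ (t : Finset Θ) (χ : t → C(Θ, ℝ)),
    (∀ x θ, 0 ≤ χ x θ) ∧ (∀ θ, ∑ x, χ x θ = 1) ∧ ∀ (x : t) θ, χ x θ ≠ 0 → dist θ x < r := by
  obtain ⟨t, ht⟩ := isCompact_univ.elim_finite_subcover (fun x : Θ => Metric.ball x r)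
    (fun x => Metric.isOpen_ball) (fun x _ => mem_iUnion.2 ⟨x, Metric.mem_ball_self hr⟩)
  let h : Θ → Θ → ℝ := fun x θ => max 0 (r - dist θ x)
  have hc : ∀ x, Continuous (h x) := fun x => by fun_prop
  have h0 : ∀ x θ, 0 ≤ h x θ := fun x θ => le_max_left _ _
  let S : Θ → ℝ := fun θ => ∑ x : t, h x θ
  have hS : ∀ θ, 0 < S θ := by
    intro θ
    obtain ⟨x, hx⟩ := mem_iUnion.1 (ht (mem_univ θ))
    obtain ⟨hxt, hx⟩ := mem_iUnion.1 hx
    refine Finset.sum_pos' (fun x _ => h0 _ _) ⟨⟨x, hxt⟩, Finset.mem_univ _, ?_⟩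
    exact lt_max_of_lt_right (by simpa using hx)
  have hSc : Continuous S := continuous_finsetSum _ fun x _ => hc x
  refine ⟨t, fun x => ⟨fun θ => h x θ / S θ, (hc x).div hSc fun θ => (hS θ).ne'⟩, ?_, ?_, ?_⟩
  · intro x θ
    exact div_nonneg (h0 _ _) (hS θ).le
  · intro θ
    change ∑ x : t, h x θ / S θ = 1
    rw [← Finset.sum_div]
    exact div_self (hS θ).ne'
  · intro x θ hne
    by_contra! hcon
    apply hne
    change h x θ / S θ = 0
    have : h x θ = 0 := max_eq_left (by linarith)
    rw [this, zero_div]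

variable [MeasurableSpace Θ] [BorelSpace Θ]

/-- Weight of a nonnegative test function. -/
noncomputable def LL (f : C(Θ, ℝ)) (b : Measure Θ) : ℝ≥0∞ := ∫⁻ θ, ENNReal.ofReal (f θ) ∂b

open Classical in
/-- The measure `b` conditioned on a nonnegative test function (a Dirac mass if degenerate). -/
noncomputable def BK (f : C(Θ, ℝ)) (x : Θ) (b : Measure Θ) : Measure Θ :=
  if LL f b = 0 then Measure.dirac x
  else (LL f b)⁻¹ • b.withDensity fun θ => ENNReal.ofReal (f θ)

lemma LL_eq (f : C(Θ, ℝ)) (h0 : ∀ θ, 0 ≤ f θ) (b : Measure Θ) [IsFiniteMeasure b] :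
    LL f b = ENNReal.ofReal (∫ θ, f θ ∂b) :=
  (ofReal_integral_eq_lintegral_ofReal (integrable_cont f b) (Eventually.of_forall h0)).symm

lemma LL_ne_top (f : C(Θ, ℝ)) (h0 : ∀ θ, 0 ≤ f θ) (b : Measure Θ) [IsFiniteMeasure b] :
    LL f b ≠ ∞ := by
  rw [LL_eq f h0]; exact ENNReal.ofReal_ne_top

lemma BK_prob (f : C(Θ, ℝ)) (h0 : ∀ θ, 0 ≤ f θ) (x : Θ) (b : Measure Θ) [IsFiniteMeasure b] :
    IsProbabilityMeasure (BK f x b) := by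
  unfold BK
  split_ifs with h
  · infer_instance
  · refine ⟨?_⟩
    simp only [Measure.smul_apply, smul_eq_mul, withDensity_apply _ MeasurableSet.univ,
      Measure.restrict_univ]
    exact ENNReal.inv_mul_cancel h (LL_ne_top f h0 b)

lemma LL_smul_BK (f : C(Θ, ℝ)) (h0 : ∀ θ, 0 ≤ f θ) (x : Θ) (b : Measure Θ) [IsFiniteMeasure b] :
    LL f b • BK f x b = b.withDensity fun θ => ENNReal.ofReal (f θ) := by
  unfold BK
  split_ifs with h
  · rw [h, zero_smul]
    symm
    have hm : Measurable fun θ => ENNReal.ofReal (f θ) := f.continuous.measurable.ennreal_ofReal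
    rw [withDensity_eq_zero_iff hm.aemeasurable]
    exact (lintegral_eq_zero_iff hm).1 h
  · rw [smul_smul, ENNReal.mul_inv_cancel h (LL_ne_top f h0 b), one_smul]

lemma BK_ae (f : C(Θ, ℝ)) {x : Θ} (b : Measure Θ) {r : ℝ} (hr : 0 < r)
    (hf : ∀ θ, f θ ≠ 0 → dist θ x < r) : ∀ᵐ θ ∂(BK f x b), dist θ x < r := by
  unfold BK
  split_ifs with h
  · rw [ae_dirac_iff]
    · simpa using hr
    · exact measurableSet_lt (by fun_prop) measurable_const
  · refine Measure.ae_smul_measure ?_ _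
    rw [ae_withDensity_iff f.continuous.measurable.ennreal_ofReal]
    refine Eventually.of_forall fun θ hθ => hf θ ?_
    rintro h0
    simp [h0] at hθ

lemma sum_withDensity {t : Finset Θ} {χ : t → C(Θ, ℝ)} (h0 : ∀ x θ, 0 ≤ χ x θ)
    (h1 : ∀ θ, ∑ x, χ x θ = 1) (b : Measure Θ) [IsFiniteMeasure b] :
    ∑ x, LL (χ x) b • BK (χ x) x b = b := by
  ext B hB
  rw [Measure.finsetSum_apply]
  simp only [LL_smul_BK _ (h0 _), withDensity_apply _ hB]
  rw [← lintegral_finsetSum _ fun x _ => (χ x).continuous.measurable.ennreal_ofReal]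
  simp only [← ENNReal.ofReal_sum_of_nonneg fun x _ => h0 x _, h1]
  simp

lemma near_point (f : C(Θ, ℝ)) {x : Θ} (m : Measure Θ) [IsProbabilityMeasure m] {r ε : ℝ}
    (hm : ∀ᵐ θ ∂m, dist θ x < r) (hf : ∀ θ θ', dist θ θ' < r → |f θ - f θ'| ≤ ε) :
    |∫ θ, f θ ∂m - f x| ≤ ε := by
  have h1 : ∫ θ, f θ ∂m - f x = ∫ θ, (f θ - f x) ∂m := by
    rw [integral_sub (integrable_cont f m) (integrable_const _)]; simp
  rw [h1]
  have := norm_integral_le_of_norm_le_const (μ := m) (f := fun θ => f θ - f x) (C := ε)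
    (by filter_upwards [hm] with θ hθ using hf _ _ hθ)
  simpa using this

lemma near_mix {ι : Type*} [Fintype ι] (f : C(Θ, ℝ)) (x : ι → Θ) (c : ι → ℝ≥0∞)
    (m m' : ι → Measure Θ) [∀ i, IsProbabilityMeasure (m i)] [∀ i, IsProbabilityMeasure (m' i)]
    (hc : ∑ i, (c i).toReal = 1) (hc' : ∀ i, c i ≠ ∞) {r ε : ℝ}
    (hm : ∀ i, ∀ᵐ θ ∂(m i), dist θ (x i) < r) (hm' : ∀ i, ∀ᵐ θ ∂(m' i), dist θ (x i) < r)
    (hf : ∀ θ θ', dist θ θ' < r → |f θ - f θ'| ≤ ε) :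
    |∫ θ, f θ ∂(∑ i, c i • m i) - ∫ θ, f θ ∂(∑ i, c i • m' i)| ≤ 2 * ε := by
  have hfin : ∀ i, IsFiniteMeasure (c i • m i) := fun i => ⟨by simpa using (hc' i).lt_top⟩
  have hfin' : ∀ i, IsFiniteMeasure (c i • m' i) := fun i => ⟨by simpa using (hc' i).lt_top⟩
  rw [integral_finsetSum_measure fun i _ => integrable_cont f _,
    integral_finsetSum_measure fun i _ => integrable_cont f _, ← Finset.sum_sub_distrib]
  refine (Finset.abs_sum_le_sum_abs _ _).trans ?_
  calc _ ≤ ∑ i, (c i).toReal * (2 * ε) := by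
        refine Finset.sum_le_sum fun i _ => ?_
        rw [integral_smul_measure, integral_smul_measure, smul_eq_mul, smul_eq_mul, ← mul_sub,
          abs_mul, abs_of_nonneg ENNReal.toReal_nonneg]
        refine mul_le_mul_of_nonneg_left ?_ ENNReal.toReal_nonneg
        have a := abs_le.1 (near_point f (m i) (hm i) hf)
        have b := abs_le.1 (near_point f (m' i) (hm' i) hf)
        rw [abs_le]
        constructor <;> linarith [a.1, a.2, b.1, b.2]
    _ = 2 * ε := by rw [← Finset.sum_mul, hc, one_mul]

end pou

section lsc
variable {Θ : Type*} [MetricSpace Θ] [CompactSpace Θ] [MeasurableSpace Θ] [BorelSpace Θ]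

lemma TT_prob {t : Finset Θ} {χ : t → C(Θ, ℝ)} (h0 : ∀ x θ, 0 ≤ χ x θ)
    (h1 : ∀ θ, ∑ x, χ x θ = 1) (b s : ProbabilityMeasure Θ) :
    IsProbabilityMeasure (∑ x, LL (χ x) (s : Measure Θ) • BK (χ x) x (b : Measure Θ)) := by
  have := fun x => BK_prob (χ x) (h0 x) x (b : Measure Θ)
  have h2 := congrArg (fun m : Measure Θ => m univ) (sum_withDensity h0 h1 (s : Measure Θ))
  have := fun x => BK_prob (χ x) (h0 x) x (s : Measure Θ)
  refine ⟨?_⟩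
  simpa [Measure.finsetSum_apply] using h2

/-- Garbling of the posterior `s` towards the reference measure `b`. -/
noncomputable def TT {t : Finset Θ} {χ : t → C(Θ, ℝ)} (h0 : ∀ x θ, 0 ≤ χ x θ)
    (h1 : ∀ θ, ∑ x, χ x θ = 1) (b s : ProbabilityMeasure Θ) : ProbabilityMeasure Θ :=
  mkP _ (TT_prob h0 h1 b s)

lemma TT_coe {t : Finset Θ} {χ : t → C(Θ, ℝ)} (h0 : ∀ x θ, 0 ≤ χ x θ)
    (h1 : ∀ θ, ∑ x, χ x θ = 1) (b s : ProbabilityMeasure Θ) :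
    (TT h0 h1 b s : Measure Θ) =
      ∑ x, LL (χ x) (s : Measure Θ) • BK (χ x) x (b : Measure Θ) := rfl

lemma measurable_LL (f : C(Θ, ℝ)) :
    Measurable fun s : ProbabilityMeasure Θ => LL f (s : Measure Θ) :=
  (Measure.measurable_lintegral f.continuous.measurable.ennreal_ofReal).comp measurable_coe

lemma measurable_TT {t : Finset Θ} {χ : t → C(Θ, ℝ)} (h0 : ∀ x θ, 0 ≤ χ x θ)
    (h1 : ∀ θ, ∑ x, χ x θ = 1) (b : ProbabilityMeasure Θ) : Measurable (TT h0 h1 b) := by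
  refine measurable_mk (Measure.measurable_of_measurable_coe _ fun B hB => ?_)
  simp only [TT_coe, Measure.finsetSum_apply, Measure.smul_apply, smul_eq_mul]
  exact Finset.measurable_sum _ fun x _ => (measurable_LL _).mul_const _

lemma TT_near {t : Finset Θ} {χ : t → C(Θ, ℝ)} (h0 : ∀ x θ, 0 ≤ χ x θ)
    (h1 : ∀ θ, ∑ x, χ x θ = 1) (b s : ProbabilityMeasure Θ) {r ε : ℝ} (hr : 0 < r)
    (h2 : ∀ (x : t) θ, χ x θ ≠ 0 → dist θ x < r) (f : C(Θ, ℝ))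
    (hf : ∀ θ θ', dist θ θ' < r → |f θ - f θ'| ≤ ε) :
    |∫ θ, f θ ∂(TT h0 h1 b s : Measure Θ) - ∫ θ, f θ ∂(s : Measure Θ)| ≤ 2 * ε := by
  have hs := sum_withDensity h0 h1 (s : Measure Θ)
  have hp := fun x => BK_prob (χ x) (h0 x) x (b : Measure Θ)
  have hp' := fun x => BK_prob (χ x) (h0 x) x (s : Measure Θ)
  have hw := sum_weights_real (c := fun x => LL (χ x) (s : Measure Θ))
    (b := fun x => mkP _ (hp' x)) (μ := s) hs
  have := near_mix f (fun x : t => (x : Θ)) (fun x => LL (χ x) (s : Measure Θ))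
    (fun x => BK (χ x) x (b : Measure Θ)) (fun x => BK (χ x) x (s : Measure Θ)) hw.1 hw.2
    (fun x => BK_ae _ _ hr (h2 x)) (fun x => BK_ae _ _ hr (h2 x)) hf
  rwa [hs] at this

lemma hat_step {F : ProbabilityMeasure Θ → ℝ} {C : ℝ} (hF : Measurable F)
    (hC : ∀ ν, |F ν| ≤ C) {t : Finset Θ} {χ : t → C(Θ, ℝ)} (h0 : ∀ x θ, 0 ≤ χ x θ)
    (h1 : ∀ θ, ∑ x, χ x θ = 1) (b ν : ProbabilityMeasure Θ)
    {q : ProbabilityMeasure (ProbabilityMeasure Θ)} (hq : q ∈ infoPolicies ν) {δ : ℝ}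
    (hδ : δ ≤ 1) (hle : ∀ x, ENNReal.ofReal (1 - δ) * LL (χ x) (ν : Measure Θ) ≤
      LL (χ x) (b : Measure Θ)) :
    (1 - δ) * ∫ s, F (TT h0 h1 b s) ∂(q : Measure (ProbabilityMeasure Θ)) - δ * C
      ≤ hat F b := by
  have hT := measurable_TT h0 h1 b
  have hp := fun x => BK_prob (χ x) (h0 x) x (b : Measure Θ)
  let c : Option t → ℝ≥0∞ := fun o => o.elim (ENNReal.ofReal (1 - δ))
    (fun x => LL (χ x) (b : Measure Θ) - ENNReal.ofReal (1 - δ) * LL (χ x) (ν : Measure Θ))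
  let bb : Option t → ProbabilityMeasure Θ := fun o => o.elim (TT h0 h1 b ν)
    (fun x => mkP _ (hp x))
  let qq : Option t → ProbabilityMeasure (ProbabilityMeasure Θ) := fun o =>
    o.elim (mkP ((q : Measure (ProbabilityMeasure Θ)).map (TT h0 h1 b))
      (Measure.isProbabilityMeasure_map hT.aemeasurable))
    (fun x => mkP (Measure.dirac (mkP _ (hp x))) inferInstance)
  have hqq : ∀ o, qq o ∈ infoPolicies (bb o) := by
    rintro (_ | x)
    · change mkP _ _ ∈ infoPolicies (TT h0 h1 b ν)
      rw [mem_info_iff]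
      ext B hB
      rw [Measure.bind_apply hB measurable_coe.aemeasurable, mkP_coe,
        lintegral_map (f := fun a : ProbabilityMeasure Θ => (a : Measure Θ) B)
          ((Measure.measurable_coe hB).comp measurable_coe) hT]
      simp only [TT_coe, Measure.finsetSum_apply, Measure.smul_apply, smul_eq_mul]
      rw [lintegral_finsetSum _ fun x _ => (measurable_LL _).mul_const _]
      refine Finset.sum_congr rfl fun x _ => ?_
      rw [lintegral_mul_const _ (measurable_LL _)]
      congr 1
      rw [← (mem_info_iff _ _).1 hq]
      unfold LL
      rw [Measure.lintegral_bind measurable_coe.aemeasurable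
        (χ x).continuous.measurable.ennreal_ofReal.aemeasurable]
    · exact dirac_mem _
  have hsum : ∑ o, c o • (bb o : Measure Θ) = (b : Measure Θ) := by
    rw [Fintype.sum_option]
    change ENNReal.ofReal (1 - δ) • (TT h0 h1 b ν : Measure Θ) +
      ∑ x, (LL (χ x) (b : Measure Θ) - ENNReal.ofReal (1 - δ) * LL (χ x) (ν : Measure Θ)) •
        BK (χ x) x (b : Measure Θ) = (b : Measure Θ)
    rw [TT_coe, Finset.smul_sum, ← Finset.sum_add_distrib]
    refine Eq.trans ?_ (sum_withDensity h0 h1 (b : Measure Θ))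
    refine Finset.sum_congr rfl fun x _ => ?_
    rw [smul_smul, ← add_smul, add_tsub_cancel_of_le (hle x)]
  have hm := mixture hF hC c bb qq hqq b hsum
  have hw := (sum_weights_real hsum).1
  rw [Fintype.sum_option] at hm hw
  have hcn : (c none).toReal = 1 - δ := ENNReal.toReal_ofReal (by linarith)
  have hIntg : ∫ ν, F ν ∂(qq none : Measure (ProbabilityMeasure Θ)) =
      ∫ s, F (TT h0 h1 b s) ∂(q : Measure (ProbabilityMeasure Θ)) :=
    integral_map hT.aemeasurable hF.aestronglyMeasurable
  rw [hcn] at hm hw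
  rw [hIntg] at hm
  have hlow : ∑ x, (c (some x)).toReal * (-C) ≤ ∑ x, (c (some x)).toReal *
      ∫ ν, F ν ∂(qq (some x) : Measure (ProbabilityMeasure Θ)) :=
    Finset.sum_le_sum fun x _ => mul_le_mul_of_nonneg_left (abs_le.1 (abs_int_le hC _)).1
      ENNReal.toReal_nonneg
  rw [← Finset.sum_mul] at hlow
  have : ∑ x, (c (some x)).toReal = δ := by linarith
  rw [this] at hlow
  linarith

lemma hat_lsc' {F : ProbabilityMeasure Θ → ℝ} {C : ℝ} (hF : LowerSemicontinuous F)
    (hC : ∀ ν, |F ν| ≤ C) : LowerSemicontinuous (hat F) := by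
  have hFm : Measurable F := hF.measurable
  intro ν c hc
  by_contra hcon
  rw [not_eventually] at hcon
  obtain ⟨q, hq, hcq⟩ := exists_lt_of_lt_hat hc
  have hr : ∀ m : ℕ, (0 : ℝ) < 1 / ((m : ℝ) + 1) := fun m => by positivity
  choose t χ h0 h1 h2 using fun m : ℕ => exists_pou (Θ := Θ) (hr m)
  have hb : ∀ m : ℕ, ∃ b : ProbabilityMeasure Θ, ¬ c < hat F b ∧
      ∀ x, ENNReal.ofReal (1 - 1 / ((m : ℝ) + 1)) * LL (χ m x) (ν : Measure Θ) ≤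
        LL (χ m x) (b : Measure Θ) := by
    intro m
    refine (hcon.and_eventually (eventually_all.2 fun x => ?_)).exists
    have hpos : 0 ≤ ∫ θ, χ m x θ ∂(ν : Measure Θ) := integral_nonneg (h0 m x)
    have hδ1 : (0 : ℝ) ≤ 1 - 1 / ((m : ℝ) + 1) := by
      have : 1 / ((m : ℝ) + 1) ≤ 1 := (div_le_one (by positivity)).2 (by simp)
      linarith
    have hev : ∀ᶠ b : ProbabilityMeasure Θ in 𝓝 ν,
        (1 - 1 / ((m : ℝ) + 1)) * ∫ θ, χ m x θ ∂(ν : Measure Θ) ≤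
          ∫ θ, χ m x θ ∂(b : Measure Θ) := by
      rcases hpos.eq_or_lt with h | h
      · refine Eventually.of_forall fun b => ?_
        rw [← h, mul_zero]
        exact integral_nonneg (h0 m x)
      · have h3 := tendsto_iff_cont.1 (tendsto_id (x := 𝓝 ν)) (χ m x)
        refine (h3.eventually (lt_mem_nhds ?_)).mono fun b hb => hb.le
        nlinarith [hr m]
    filter_upwards [hev] with b hb
    rw [LL_eq _ (h0 m x), LL_eq _ (h0 m x), ← ENNReal.ofReal_mul hδ1]
    exact ENNReal.ofReal_le_ofReal hb
  choose b hb1 hb2 using hb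
  set J := ∫ s, F s ∂(q : Measure (ProbabilityMeasure Θ)) with hJ
  have hδlim : Tendsto (fun m : ℕ => 1 / ((m : ℝ) + 1)) atTop (𝓝 0) :=
    tendsto_one_div_add_atTop_nhds_zero_nat
  have key : J ≤ (c + J) / 2 := by
    refine fatou (q : Measure (ProbabilityMeasure Θ)) hF hFm hC
      (fun m => TT (h0 m) (h1 m) (b m)) (fun m => measurable_TT _ _ _) ?_ ?_
    · refine Eventually.of_forall fun s => tendsto_iff_cont.2 fun f => ?_
      rw [Metric.tendsto_nhds]
      intro ε hε
      obtain ⟨η, hη, hfη⟩ := Metric.uniformContinuous_iff.1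
        (CompactSpace.uniformContinuous_of_continuous f.continuous) (ε / 3) (by positivity)
      filter_upwards [hδlim.eventually (gt_mem_nhds hη)] with m hm
      have := TT_near (h0 m) (h1 m) (b m) s (hr m) (h2 m) f (ε := ε / 3) (fun θ θ' h => by
        have := hfη (h.trans hm)
        rw [Real.dist_eq] at this
        exact this.le)
      rw [Real.dist_eq]
      linarith
    · have hl : Tendsto (fun m : ℕ => 1 / ((m : ℝ) + 1) * (2 * C)) atTop (𝓝 0) := by
        simpa using hδlim.mul_const (2 * C)
      filter_upwards [hl.eventually (gt_mem_nhds (show 0 < (J - c) / 2 by linarith))] with m hm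
      have hs := hat_step hFm hC (h0 m) (h1 m) (b m) ν hq (δ := 1 / ((m : ℝ) + 1))
        ((div_le_one (by positivity)).2 (by simp)) (hb2 m)
      have hle := not_lt.1 (hb1 m)
      have hI := (abs_le.1 (abs_int_le (F := fun s => F (TT (h0 m) (h1 m) (b m) s))
        (fun s => hC _) (q : Measure (ProbabilityMeasure Θ)))).2
      have := mul_le_mul_of_nonneg_left hI (hr m).le
      linarith
  linarith

end lsc

section jensen
variable {Θ : Type*} [TopologicalSpace Θ] [CompactSpace Θ] [TopologicalSpace.MetrizableSpace Θ]
  [MeasurableSpace Θ] [BorelSpace Θ]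

lemma hat_lsc {F : ProbabilityMeasure Θ → ℝ} {C : ℝ} (hF : LowerSemicontinuous F)
    (hC : ∀ ν, |F ν| ≤ C) : LowerSemicontinuous (hat F) := by
  let _ := TopologicalSpace.metrizableSpaceMetric Θ
  exact hat_lsc' hF hC

lemma cell_bary {p : ProbabilityMeasure (ProbabilityMeasure Θ)} (μ : ProbabilityMeasure Θ)
    {S : Set (ProbabilityMeasure Θ)} :
    ∃ b : ProbabilityMeasure Θ,
      (p : Measure (ProbabilityMeasure Θ)) S • (b : Measure Θ) =
        ((p : Measure (ProbabilityMeasure Θ)).restrict S).bind (fun ν => (ν : Measure Θ)) := by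
  by_cases h : (p : Measure (ProbabilityMeasure Θ)) S = 0
  · refine ⟨μ, ?_⟩
    rw [h, Measure.restrict_eq_zero.2 h]
    simp
  · have hp : IsProbabilityMeasure (((p : Measure (ProbabilityMeasure Θ)) S)⁻¹ •
        ((p : Measure (ProbabilityMeasure Θ)).restrict S).bind (fun ν => (ν : Measure Θ))) := by
      refine ⟨?_⟩
      rw [Measure.smul_apply, Measure.bind_apply MeasurableSet.univ measurable_coe.aemeasurable]
      simp only [measure_univ, lintegral_const, one_mul, Measure.restrict_apply MeasurableSet.univ,
        univ_inter, smul_eq_mul]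
      exact ENNReal.inv_mul_cancel h (measure_ne_top _ _)
    refine ⟨mkP _ hp, ?_⟩
    rw [mkP_coe, smul_smul, ENNReal.mul_inv_cancel h (measure_ne_top _ _), one_smul]

lemma cell_bounds {p : ProbabilityMeasure (ProbabilityMeasure Θ)}
    {S : Set (ProbabilityMeasure Θ)} (hS : MeasurableSet S) {b : ProbabilityMeasure Θ}
    (hb : (p : Measure (ProbabilityMeasure Θ)) S • (b : Measure Θ) =
        ((p : Measure (ProbabilityMeasure Θ)).restrict S).bind (fun ν => (ν : Measure Θ)))
    (hpS : (p : Measure (ProbabilityMeasure Θ)) S ≠ 0) (f : C(Θ, ℝ)) (hf : ∀ θ, 0 ≤ f θ)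
    {lo hi : ℝ} (hhi : 0 ≤ hi)
    (h : ∀ s ∈ S, lo ≤ ∫ θ, f θ ∂(s : Measure Θ) ∧ ∫ θ, f θ ∂(s : Measure Θ) ≤ hi) :
    lo ≤ ∫ θ, f θ ∂(b : Measure Θ) ∧ ∫ θ, f θ ∂(b : Measure Θ) ≤ hi := by
  have hfm : Measurable fun θ => ENNReal.ofReal (f θ) := f.continuous.measurable.ennreal_ofReal
  have hL : ∀ m : ProbabilityMeasure Θ, ∫⁻ θ, ENNReal.ofReal (f θ) ∂(m : Measure Θ) =
      ENNReal.ofReal (∫ θ, f θ ∂(m : Measure Θ)) := fun m =>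
    (ofReal_integral_eq_lintegral_ofReal (integrable_cont f _) (Eventually.of_forall hf)).symm
  have h1 : (p : Measure (ProbabilityMeasure Θ)) S * ENNReal.ofReal (∫ θ, f θ ∂(b : Measure Θ)) =
      ∫⁻ s in S, ENNReal.ofReal (∫ θ, f θ ∂(s : Measure Θ))
        ∂(p : Measure (ProbabilityMeasure Θ)) := by
    rw [← hL b, ← smul_eq_mul, ← lintegral_smul_measure, hb,
      Measure.lintegral_bind measurable_coe.aemeasurable hfm.aemeasurable]
    simp only [hL]
  have hne : (p : Measure (ProbabilityMeasure Θ)) S ≠ ∞ := measure_ne_top _ _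
  have hlow : (p : Measure (ProbabilityMeasure Θ)) S * ENNReal.ofReal lo ≤
      (p : Measure (ProbabilityMeasure Θ)) S * ENNReal.ofReal (∫ θ, f θ ∂(b : Measure Θ)) := by
    rw [h1, mul_comm, ← setLIntegral_const]
    exact setLIntegral_mono' hS fun s hs => ENNReal.ofReal_le_ofReal (h s hs).1
  have hup : (p : Measure (ProbabilityMeasure Θ)) S *
      ENNReal.ofReal (∫ θ, f θ ∂(b : Measure Θ)) ≤
      (p : Measure (ProbabilityMeasure Θ)) S * ENNReal.ofReal hi := by
    rw [h1, mul_comm, ← setLIntegral_const]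
    exact setLIntegral_mono' hS fun s hs => ENNReal.ofReal_le_ofReal (h s hs).2
  rw [ENNReal.mul_le_mul_iff_right hpS hne] at hlow hup
  exact ⟨(ENNReal.ofReal_le_ofReal_iff (integral_nonneg hf)).1 hlow,
    (ENNReal.ofReal_le_ofReal_iff hhi).1 hup⟩

lemma jensen_fin {F : ProbabilityMeasure Θ → ℝ} {C : ℝ} (hF : Measurable F)
    (hC : ∀ ν, |F ν| ≤ C) {p : ProbabilityMeasure (ProbabilityMeasure Θ)}
    {μ : ProbabilityMeasure Θ} (hp : p ∈ infoPolicies μ) {ι : Type*} [Fintype ι]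
    [MeasurableSpace ι] [MeasurableSingletonClass ι] {G : ProbabilityMeasure Θ → ι}
    (hG : Measurable G) (b : ι → ProbabilityMeasure Θ)
    (hb : ∀ i, (p : Measure (ProbabilityMeasure Θ)) (G ⁻¹' {i}) • (b i : Measure Θ) =
        ((p : Measure (ProbabilityMeasure Θ)).restrict (G ⁻¹' {i})).bind
          (fun ν => (ν : Measure Θ))) :
    ∫ s, hat F (b (G s)) ∂(p : Measure (ProbabilityMeasure Θ)) ≤ hat F μ := by
  have hcell : ∀ i, MeasurableSet (G ⁻¹' {i}) := fun i => hG (measurableSet_singleton i)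
  have hsum : ∑ i, (p : Measure (ProbabilityMeasure Θ)) (G ⁻¹' {i}) • (b i : Measure Θ) =
      (μ : Measure Θ) := by
    ext B hB
    rw [Measure.finsetSum_apply, ← (mem_info_iff _ _).1 hp,
      Measure.bind_apply hB measurable_coe.aemeasurable]
    simp only [hb, Measure.bind_apply hB measurable_coe.aemeasurable]
    rw [← lintegral_finsetSum_measure]
    congr 1
    ext D hD
    rw [Measure.finsetSum_apply]
    simp only [Measure.restrict_apply hD]
    have hU : D = ⋃ i ∈ (Finset.univ : Finset ι), D ∩ G ⁻¹' {i} := by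
      ext s; simp
    conv_rhs => rw [hU]
    rw [measure_biUnion_finset]
    · intro i _ j _ hij
      rw [Function.onFun, Set.disjoint_left]
      rintro s ⟨-, hs⟩ ⟨-, hs'⟩
      exact hij (by rw [← show G s = i from hs, ← show G s = j from hs'])
    · exact fun i _ => hD.inter (hcell i)
  have hIntg : ∫ s, hat F (b (G s)) ∂(p : Measure (ProbabilityMeasure Θ)) =
      ∑ i, ((p : Measure (ProbabilityMeasure Θ)) (G ⁻¹' {i})).toReal * hat F (b i) := by
    have hm : Measurable fun i => hat F (b i) := measurable_of_finite _
    have hP : IsProbabilityMeasure ((p : Measure (ProbabilityMeasure Θ)).map G) :=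
      Measure.isProbabilityMeasure_map hG.aemeasurable
    rw [← integral_map (f := fun i => hat F (b i)) hG.aemeasurable hm.aestronglyMeasurable,
      integral_fintype (integrable_bdd hm (fun i => abs_hat_le hC _) _)]
    refine Finset.sum_congr rfl fun i _ => ?_
    rw [Measure.real, Measure.map_apply hG (measurableSet_singleton i), smul_eq_mul]
  rw [hIntg]
  refine le_of_forall_pos_le_add fun ε hε => ?_
  have hq : ∀ i, ∃ q ∈ infoPolicies (b i), hat F (b i) - ε <
      ∫ ν, F ν ∂(q : Measure (ProbabilityMeasure Θ)) := fun i =>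
    exists_lt_of_lt_hat (by linarith)
  choose q hq1 hq2 using hq
  have hm := mixture hF hC _ b q hq1 μ hsum
  have hw := (sum_weights_real hsum).1
  have : ∑ i, ((p : Measure (ProbabilityMeasure Θ)) (G ⁻¹' {i})).toReal * (hat F (b i) - ε) ≤
      hat F μ := le_trans (Finset.sum_le_sum fun i _ =>
        mul_le_mul_of_nonneg_left (hq2 i).le ENNReal.toReal_nonneg) hm
  simp only [mul_sub] at this
  rw [Finset.sum_sub_distrib, ← Finset.sum_mul, hw] at this
  linarith

lemma jensen {F : ProbabilityMeasure Θ → ℝ} {C : ℝ} (hF : LowerSemicontinuous F)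
    (hC : ∀ ν, |F ν| ≤ C) {p : ProbabilityMeasure (ProbabilityMeasure Θ)}
    {μ : ProbabilityMeasure Θ} (hp : p ∈ infoPolicies μ) :
    ∫ s, hat F s ∂(p : Measure (ProbabilityMeasure Θ)) ≤ hat F μ := by
  have hH := hat_lsc hF hC
  obtain ⟨h, h0, h1, hh⟩ := exists_tests (Θ := Θ)
  let φ : ℕ → ProbabilityMeasure Θ → ℝ := fun j ν => ∫ θ, h j θ ∂(ν : Measure Θ)
  have hφ0 : ∀ j ν, 0 ≤ φ j ν := fun j ν => integral_nonneg (h0 j)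
  have hφ1 : ∀ j ν, φ j ν ≤ 1 := fun j ν => by
    have := integral_mono (integrable_cont (h j) (ν : Measure Θ)) (integrable_const 1) (h1 j)
    simpa using this
  have hlt : ∀ (n j : ℕ) ν, ⌊(n : ℝ) * φ j ν⌋₊ < n + 1 := fun n j ν => by
    rw [Nat.lt_succ_iff]
    apply Nat.floor_le_of_le
    nlinarith [hφ1 j ν, Nat.cast_nonneg (α := ℝ) n]
  let G : (n : ℕ) → ProbabilityMeasure Θ → (Fin n → Fin (n + 1)) := fun n ν j =>
    ⟨⌊(n : ℝ) * φ j ν⌋₊, hlt n j ν⟩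
  have hG : ∀ n, Measurable (G n) := by
    intro n
    refine measurable_pi_lambda _ fun j => measurable_to_countable' fun k => ?_
    have hm : Measurable fun ν => ⌊(n : ℝ) * φ j ν⌋₊ :=
      Nat.measurable_floor.comp ((measurable_integral (h j)).const_mul _)
    have : (fun ν => G n ν j) ⁻¹' {k} = (fun ν => ⌊(n : ℝ) * φ j ν⌋₊) ⁻¹' {(k : ℕ)} := by
      ext ν
      simp [G, Fin.ext_iff]
    rw [this]
    exact hm (measurableSet_singleton _)
  choose b hb using fun (n : ℕ) (i : Fin n → Fin (n + 1)) =>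
    cell_bary (p := p) μ (S := G n ⁻¹' {i})
  refine fatou (p : Measure (ProbabilityMeasure Θ)) hH hH.measurable (abs_hat_le hC)
    (fun n s => b n (G n s)) (fun n => (measurable_of_finite _).comp (hG n)) ?_
    (Eventually.of_forall fun n => jensen_fin hF.measurable hC hp (hG n) (b n) (hb n))
  have hae : ∀ᵐ s ∂(p : Measure (ProbabilityMeasure Θ)), ∀ n,
      (p : Measure (ProbabilityMeasure Θ)) (G n ⁻¹' {G n s}) ≠ 0 := by
    rw [ae_all_iff]
    intro n
    have hz : (p : Measure (ProbabilityMeasure Θ)) (⋃ i ∈ {i | (p : Measure (ProbabilityMeasure Θ))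
        (G n ⁻¹' {i}) = 0}, G n ⁻¹' {i}) = 0 :=
      (measure_biUnion_null_iff (Set.to_countable _)).2 fun i hi => hi
    rw [ae_iff]
    refine measure_mono_null ?_ hz
    intro s hs
    simp only [ne_eq, not_not, mem_ofPred_eq] at hs
    exact mem_biUnion (x := G n s) hs rfl
  filter_upwards [hae] with s hs
  refine hh s _ fun j => ?_
  rw [tendsto_map'_iff]
  rw [tendsto_iff_dist_tendsto_zero]
  refine squeeze_zero' (Eventually.of_forall fun _ => dist_nonneg) ?_
    (tendsto_one_div_atTop_nhds_zero_nat (𝕜 := ℝ))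
  filter_upwards [eventually_gt_atTop j] with n hn
  have hn0 : (0 : ℝ) < n := by exact_mod_cast (Nat.zero_le j).trans_lt hn
  set k : ℕ := ⌊(n : ℝ) * φ j s⌋₊ with hk
  have hcellb : ∀ s' : ProbabilityMeasure Θ, ⌊(n : ℝ) * φ j s'⌋₊ = k →
      (k : ℝ) / n ≤ φ j s' ∧ φ j s' ≤ ((k : ℝ) + 1) / n := by
    intro s' hs'
    have hp0 : 0 ≤ (n : ℝ) * φ j s' := mul_nonneg hn0.le (hφ0 j s')
    rw [div_le_iff₀ hn0, le_div_iff₀ hn0, ← hs']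
    constructor
    · have := Nat.floor_le hp0
      linarith
    · have := Nat.lt_floor_add_one ((n : ℝ) * φ j s')
      linarith
  have hB := cell_bounds (hG n (measurableSet_singleton (G n s))) (hb n (G n s)) (hs n) (h j) (h0 j)
    (lo := (k : ℝ) / n) (hi := ((k : ℝ) + 1) / n) (by positivity) (fun s' hs' => hcellb s' (by
      have h2 : G n s' = G n s := hs'
      have h3 := congrArg Fin.val (congrFun h2 ⟨j, hn⟩)
      exact h3))
  have hs2 := hcellb s rfl
  change dist (φ j (b n (G n s))) (φ j s) ≤ _
  change (k : ℝ) / n ≤ φ j (b n (G n s)) ∧ φ j (b n (G n s)) ≤ _ at hB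
  rw [add_div] at hB hs2
  rw [Real.dist_eq, abs_le]
  constructor <;> linarith [hB.1, hB.2, hs2.1, hs2.2]

end jensen

section berge
variable {A Θ : Type*}
    [TopologicalSpace A] [CompactSpace A] [Nonempty A]
    [TopologicalSpace Θ] [CompactSpace Θ] [TopologicalSpace.MetrizableSpace Θ]
    [MeasurableSpace Θ] [BorelSpace Θ] {uS uR : A → Θ → ℝ}

lemma continuous_EU {u : A → Θ → ℝ} (hu : Continuous fun p : A × Θ => u p.1 p.2) :
    Continuous fun p : ProbabilityMeasure Θ × A => ∫ θ, u p.2 θ ∂(p.1 : Measure Θ) := by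
  let U : C(A, C(Θ, ℝ)) := ContinuousMap.curry ⟨fun p : A × Θ => u p.1 p.2, hu⟩
  exact continuous_integral_joint.comp
    ((U.continuous.comp continuous_snd).prodMk continuous_fst)

lemma BR_closed_graph (hR : Continuous fun p : A × Θ => uR p.1 p.2) :
    IsClosed {p : ProbabilityMeasure Θ × A | p.2 ∈ bestResponses uR p.1} := by
  have : {p : ProbabilityMeasure Θ × A | p.2 ∈ bestResponses uR p.1} =
      ⋂ a' : A, {p | ∫ θ, uR a' θ ∂(p.1 : Measure Θ) ≤ ∫ θ, uR p.2 θ ∂(p.1 : Measure Θ)} := by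
    ext p
    simp only [mem_iInter]
    rfl
  rw [this]
  refine isClosed_iInter fun a' => isClosed_le ?_ (continuous_EU hR)
  exact (continuous_EU hR).comp (continuous_fst.prodMk continuous_const)

lemma BR_nonempty (hR : Continuous fun p : A × Θ => uR p.1 p.2) (ν : ProbabilityMeasure Θ) :
    (bestResponses uR ν).Nonempty := by
  have hc : Continuous fun a => ∫ θ, uR a θ ∂(ν : Measure Θ) :=
    (continuous_EU hR).comp (continuous_const.prodMk continuous_id)
  obtain ⟨a, -, ha⟩ := isCompact_univ.exists_isMaxOn univ_nonempty hc.continuousOn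
  exact ⟨a, fun a' => ha (mem_univ a')⟩

lemma img_compact (hS : Continuous fun p : A × Θ => uS p.1 p.2)
    (hR : Continuous fun p : A × Θ => uR p.1 p.2) (ν : ProbabilityMeasure Θ) :
    IsCompact (senderEU uS ν '' bestResponses uR ν) := by
  have hcl : IsClosed (bestResponses uR ν) :=
    (BR_closed_graph hR).preimage (continuous_const.prodMk continuous_id : Continuous
      fun a : A => (ν, a))
  have hc : Continuous (senderEU uS ν) :=
    (continuous_EU hS).comp (continuous_const.prodMk continuous_id)
  exact hcl.isCompact.image hc

lemma v_usc (hS : Continuous fun p : A × Θ => uS p.1 p.2)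
    (hR : Continuous fun p : A × Θ => uR p.1 p.2) :
    UpperSemicontinuous (vFun uS uR : ProbabilityMeasure Θ → ℝ) := by
  rw [upperSemicontinuous_iff_isClosed_preimage]
  intro c
  have hK : IsClosed ({p : ProbabilityMeasure Θ × A | p.2 ∈ bestResponses uR p.1} ∩
      {p | c ≤ ∫ θ, uS p.2 θ ∂(p.1 : Measure Θ)}) :=
    (BR_closed_graph hR).inter (isClosed_le continuous_const (continuous_EU hS))
  convert isClosedMap_fst_of_compactSpace _ hK using 1
  ext ν
  have hcp := img_compact hS hR ν
  constructor
  · intro h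
    obtain ⟨a, ha, hav⟩ := hcp.sSup_mem ((BR_nonempty hR ν).image _)
    refine ⟨(ν, a), ⟨ha, ?_⟩, rfl⟩
    change c ≤ senderEU uS ν a
    rw [hav]
    exact h
  · rintro ⟨⟨ν', a⟩, ⟨ha, hc⟩, rfl⟩
    exact le_trans hc (le_csSup hcp.bddAbove ⟨a, ha, rfl⟩)

lemma w_eq (ν : ProbabilityMeasure Θ) :
    wFun uS uR ν = - vFun (fun a θ => - uS a θ) uR ν := by
  unfold wFun vFun
  rw [Real.sInf_def]
  congr 2
  ext r
  simp only [Set.mem_neg, mem_image, senderEU, integral_neg]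
  constructor
  · rintro ⟨a, ha, h⟩; exact ⟨a, ha, by linarith⟩
  · rintro ⟨a, ha, h⟩; exact ⟨a, ha, by linarith⟩

lemma w_lsc (hS : Continuous fun p : A × Θ => uS p.1 p.2)
    (hR : Continuous fun p : A × Θ => uR p.1 p.2) :
    LowerSemicontinuous (wFun uS uR : ProbabilityMeasure Θ → ℝ) := by
  have hv := v_usc (uS := fun a θ => - uS a θ) hS.neg hR
  rw [upperSemicontinuous_iff_isClosed_preimage] at hv
  rw [lowerSemicontinuous_iff_isClosed_preimage]
  intro c
  convert hv (-c) using 1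
  ext ν
  simp only [mem_preimage, mem_Iic, mem_Ici, w_eq ν]
  constructor <;> intro h <;> linarith

lemma exists_bound (hS : Continuous fun p : A × Θ => uS p.1 p.2) :
    ∃ C, ∀ (ν : ProbabilityMeasure Θ) a, |senderEU uS ν a| ≤ C := by
  obtain ⟨C, hC⟩ := isCompact_univ.exists_bound_of_continuousOn hS.continuousOn
  exact ⟨C, fun ν a => abs_int_le (fun θ => hC (a, θ) (mem_univ _)) _⟩

end berge

end UP

/-- **Global uniqueness.** The sender has a unique equilibrium payoff for every prior
(`ŵ = v̂` everywhere) if and only if `ŵ ≥ v` pointwise. -/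
theorem unique_payoff_all_priors_iff
    {A Θ : Type*}
    [TopologicalSpace A] [CompactSpace A] [TopologicalSpace.MetrizableSpace A] [Nonempty A]
    [MeasurableSpace A] [BorelSpace A]
    [TopologicalSpace Θ] [CompactSpace Θ] [TopologicalSpace.MetrizableSpace Θ] [Nonempty Θ]
    [MeasurableSpace Θ] [BorelSpace Θ]
    (uS uR : A → Θ → ℝ)
    (hS : Continuous fun p : A × Θ => uS p.1 p.2)
    (hR : Continuous fun p : A × Θ => uR p.1 p.2) :
    (∀ μ : ProbabilityMeasure Θ, wHat uS uR μ = vHat uS uR μ) ↔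
      (∀ μ : ProbabilityMeasure Θ, vFun uS uR μ ≤ wHat uS uR μ) := by
  obtain ⟨C, hC⟩ := UP.exists_bound (uS := uS) (Θ := Θ) hS
  have hvC : ∀ ν : ProbabilityMeasure Θ, |vFun uS uR ν| ≤ C := fun ν => by
    obtain ⟨a, -, ha⟩ := (UP.img_compact hS hR ν).sSup_mem ((UP.BR_nonempty hR ν).image _)
    rw [vFun, ← ha]; exact hC ν a
  have hwC : ∀ ν : ProbabilityMeasure Θ, |wFun uS uR ν| ≤ C := fun ν => by
    obtain ⟨a, -, ha⟩ := (UP.img_compact hS hR ν).sInf_mem ((UP.BR_nonempty hR ν).image _)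
    rw [wFun, ← ha]; exact hC ν a
  have hwv : ∀ ν : ProbabilityMeasure Θ, wFun uS uR ν ≤ vFun uS uR ν := fun ν =>
    csInf_le_csSup ((UP.BR_nonempty hR ν).image _) (UP.img_compact hS hR ν).bddBelow
      (UP.img_compact hS hR ν).bddAbove
  have hv := UP.v_usc (uS := uS) (uR := uR) (Θ := Θ) hS hR
  have hw := UP.w_lsc (uS := uS) (uR := uR) (Θ := Θ) hS hR
  have hvm : Measurable (vFun uS uR : ProbabilityMeasure Θ → ℝ) := hv.measurable
  have hwm : Measurable (wFun uS uR : ProbabilityMeasure Θ → ℝ) := hw.measurable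
  constructor
  · intro h μ
    rw [h μ]
    have h1 := UP.le_hat hvC (UP.dirac_mem μ)
    rw [UP.mkP_coe, integral_dirac' _ _ hvm.stronglyMeasurable] at h1
    exact h1
  · intro h μ
    apply le_antisymm
    · refine UP.hat_le (F := wFun uS uR) fun p hp => ?_
      exact (integral_mono (UP.integrable_bdd hwm hwC _) (UP.integrable_bdd hvm hvC _) hwv).trans
        (UP.le_hat hvC hp)
    · refine UP.hat_le (F := vFun uS uR) fun p hp => ?_
      refine le_trans ?_ (UP.jensen hw hwC hp)
      exact integral_mono (UP.integrable_bdd hvm hvC _)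
        (UP.integrable_bdd (UP.hat_lsc hw hwC).measurable (UP.abs_hat_le hwC) _) h
end
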